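/- arXiv:2409.19500 — 3 statements merged into one kernel-verified Lean document; each statement's English description precedes it below -/
import Mathlib

section
/- Let R = ℚ[x,y,w]/(x+y+w), with the dihedral group D₆ = ⟨a,b ∣ a⁶ = b² = abab = 1⟩ of order 12 acting on R by ℚ-algebra automorphisms, where the subgroup ⟨a²,b⟩, identified with the symmetric group S₃, permutes the variables x, y, w, and the central element a³ multiplies each of x, y, w by −1. Then the invariant subalgebra R^{D₆} is a polynomial algebra on z₁ = x²+y²+w² and z₂ = x⁶+y⁶+w⁶: it equals the ℚ-subalgebra of R generated by z₁ and z₂, and z₁, z₂ are algebraically independent over ℚ. -/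
/-!
An invariant `r ∈ R` is the class of a symmetric polynomial: lift `r` to `ℚ[x,y,w]` and average
the lift over `S₃`. By the fundamental theorem of symmetric polynomials `r` is a polynomial in the
classes of the elementary symmetric polynomials, and the first of these vanishes in `R`, so
`r ∈ ℚ[e₂, e₃]`. Newton's identities with `e₁ = 0` give `z₁ = -2e₂` and `z₂ = 3e₃² - 2e₂³`, so
that `ℚ[e₂, e₃] = ℚ[z₁, z₂] + e₃ ℚ[z₁, z₂]` (`exists_decomp`). The sign automorphism fixes
`ℚ[z₁, z₂]` and negates `e₃`; hence a sign-invariant element `A + e₃ B` equals its mean with its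
image, which is `A`.

For algebraic independence, every `(u, v) ∈ ℂ²` is the value of `(z₁, z₂)` at a `ℂ`-point of `R`
(`exists_point`): the coordinates are the roots of `t³ + at - b` with `a = -u/2` and
`3b² = v + 2a³`. A polynomial relation between `z₁` and `z₂` therefore vanishes on all of `ℂ²`,
so it is zero.
-/

open MvPolynomial

noncomputable section

/-- The polynomial ring `ℚ[x,y,w]`, with `x = X 0`, `y = X 1`, `w = X 2`. -/
abbrev P3 : Type := MvPolynomial (Fin 3) ℚ

/-- The ideal `(x+y+w)`. -/
def I1 : Ideal P3 := Ideal.span {(X 0 + X 1 + X 2 : P3)}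

/-- `R = ℚ[x,y,w]/(x+y+w)`. -/
abbrev Rq : Type := P3 ⧸ I1

/-- The quotient map `ℚ[x,y,w] → R`. -/
def mkR : P3 →ₐ[ℚ] Rq := Ideal.Quotient.mkₐ ℚ I1

lemma rename_sum (σ : Equiv.Perm (Fin 3)) :
    rename σ ((X 0 : P3) + X 1 + X 2) = (X 0 : P3) + X 1 + X 2 := by
  have h : ((X 0 : P3) + X 1 + X 2) = ∑ i, (X i : P3) := by
    simp [Fin.sum_univ_three]
  rw [h, map_sum]
  simp only [rename_X]
  exact Fintype.sum_equiv σ _ _ fun i => rfl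

lemma rename_mem_I1 (σ : Equiv.Perm (Fin 3)) {p : P3} (hp : p ∈ I1) :
    rename σ p ∈ I1 := by
  have hle : I1.map (rename σ : P3 →ₐ[ℚ] P3).toRingHom ≤ I1 := by
    rw [I1, Ideal.map_span, Ideal.span_le]
    rintro q ⟨r, hr, rfl⟩
    simp only [Set.mem_singleton_iff] at hr
    subst hr
    exact Ideal.subset_span
      (by simp only [AlgHom.toRingHom_eq_coe, RingHom.coe_coe, rename_sum σ]; rfl)
  exact hle (Ideal.mem_map_of_mem _ hp)

/-- The automorphism of `R` induced by a permutation `σ` of the variables `x,y,w`; for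
`σ` ranging over `S₃` these are the actions of the elements of the subgroup `⟨a²,b⟩ ≅ S₃`
of `D₆`. -/
def permRq (σ : Equiv.Perm (Fin 3)) : Rq →ₐ[ℚ] Rq :=
  Ideal.Quotient.liftₐ I1 (mkR.comp (rename σ)) (fun p hp => by
    simp only [AlgHom.comp_apply, mkR, Ideal.Quotient.mkₐ_eq_mk]
    exact Ideal.Quotient.eq_zero_iff_mem.mpr (rename_mem_I1 σ hp))

/-- Negation of the variables, as an endomorphism of `ℚ[x,y,w]`. -/
def negP : P3 →ₐ[ℚ] P3 := aeval (fun i => -X i)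

lemma negP_mem_I1 {p : P3} (hp : p ∈ I1) : negP p ∈ I1 := by
  have hle : I1.map negP.toRingHom ≤ I1 := by
    rw [I1, Ideal.map_span, Ideal.span_le]
    rintro q ⟨r, hr, rfl⟩
    simp only [Set.mem_singleton_iff] at hr
    subst hr
    have : negP ((X 0 : P3) + X 1 + X 2) = -(X 0 + X 1 + X 2) := by
      simp [negP]; try ring
    simp only [AlgHom.toRingHom_eq_coe, RingHom.coe_coe, this]
    exact neg_mem (Ideal.subset_span rfl)
  exact hle (Ideal.mem_map_of_mem _ hp)

/-- The automorphism of `R` given by the central element `a³` of `D₆`: it multiplies each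
of `x, y, w` by `−1`. -/
def negRq : Rq →ₐ[ℚ] Rq :=
  Ideal.Quotient.liftₐ I1 (mkR.comp negP) (fun p hp => by
    simp only [AlgHom.comp_apply, mkR, Ideal.Quotient.mkₐ_eq_mk]
    exact Ideal.Quotient.eq_zero_iff_mem.mpr (negP_mem_I1 hp))

/-- `z₁ = x² + y² + w² ∈ R`. -/
def z1 : Rq := mkR (X 0 ^ 2 + X 1 ^ 2 + X 2 ^ 2)

/-- `z₂ = x⁶ + y⁶ + w⁶ ∈ R`. -/
def z2 : Rq := mkR (X 0 ^ 6 + X 1 ^ 6 + X 2 ^ 6)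

/-! ### Elementary symmetric classes and Newton identities -/

/-- The class in `R` of the second elementary symmetric polynomial. -/
def e2 : Rq := mkR (X 0 * X 1 + X 0 * X 2 + X 1 * X 2)

/-- The class in `R` of the third elementary symmetric polynomial. -/
def e3 : Rq := mkR (X 0 * X 1 * X 2)

lemma mkR_surjective : Function.Surjective mkR := Ideal.Quotient.mkₐ_surjective ℚ I1

lemma permRq_mkR (σ : Equiv.Perm (Fin 3)) (p : P3) : permRq σ (mkR p) = mkR (rename σ p) := rfl

lemma negRq_mkR (p : P3) : negRq (mkR p) = mkR (negP p) := rfl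

lemma mkR_sum : mkR (X 0) + mkR (X 1) + mkR (X 2) = 0 := by
  rw [← map_add, ← map_add]
  exact Ideal.Quotient.eq_zero_iff_mem.mpr (Ideal.subset_span rfl)

/-- Newton's identity in degree two, with `e₁ = 0`. -/
lemma z1_eq : z1 = -2 * e2 := by
  have h := mkR_sum
  simp only [z1, e2, map_add, map_mul, map_pow]
  generalize mkR (X 0) = x at *
  generalize mkR (X 1) = y at *
  generalize mkR (X 2) = w at *
  obtain rfl : w = -x - y := by linear_combination h
  ring

/-- Newton's identity in degree six, with `e₁ = 0`. -/
lemma z2_eq : z2 = 3 * e3 ^ 2 - 2 * e2 ^ 3 := by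
  have h := mkR_sum
  simp only [z2, e2, e3, map_add, map_mul, map_pow]
  generalize mkR (X 0) = x at *
  generalize mkR (X 1) = y at *
  generalize mkR (X 2) = w at *
  obtain rfl : w = -x - y := by linear_combination h
  ring

/-! ### Invariance of `z₁` and `z₂` -/

lemma permRq_psum (σ : Equiv.Perm (Fin 3)) (n : ℕ) :
    permRq σ (mkR (X 0 ^ n + X 1 ^ n + X 2 ^ n)) = mkR (X 0 ^ n + X 1 ^ n + X 2 ^ n) := by
  have h : (X 0 ^ n + X 1 ^ n + X 2 ^ n : P3) = psum (Fin 3) ℚ n := by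
    simp [psum, Fin.sum_univ_three]
  rw [h, permRq_mkR, psum_isSymmetric]

lemma permRq_of_mem (σ : Equiv.Perm (Fin 3)) {r : Rq}
    (hr : r ∈ Algebra.adjoin ℚ ({z1, z2} : Set Rq)) : permRq σ r = r := by
  have hle : Algebra.adjoin ℚ ({z1, z2} : Set Rq) ≤
      AlgHom.equalizer (permRq σ) (AlgHom.id ℚ Rq) := by
    rw [Algebra.adjoin_le_iff]
    rintro _ (rfl | rfl)
    · exact permRq_psum σ 2
    · exact permRq_psum σ 6
  exact hle hr

lemma negRq_of_mem {r : Rq}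
    (hr : r ∈ Algebra.adjoin ℚ ({z1, z2} : Set Rq)) : negRq r = r := by
  have hle : Algebra.adjoin ℚ ({z1, z2} : Set Rq) ≤
      AlgHom.equalizer negRq (AlgHom.id ℚ Rq) := by
    rw [Algebra.adjoin_le_iff]
    rintro _ (rfl | rfl) <;> rw [SetLike.mem_coe, AlgHom.mem_equalizer]
    · rw [z1, negRq_mkR]
      simp [negP]
    · rw [z2, negRq_mkR]
      simp [negP, Even.neg_pow (by decide : Even 6)]
  exact hle hr

lemma negRq_e3 : negRq e3 = -e3 := by
  rw [e3, negRq_mkR]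
  simp [negP]

/-! ### Decomposition of `ℚ[e₂, e₃]` over `ℚ[z₁, z₂]` -/

lemma eq_neg_half_smul {A : Type*} [CommRing A] [Algebra ℚ A] {a z : A} (h : z = -2 * a) :
    a = (-1 / 2 : ℚ) • z := by
  rw [h, neg_mul, two_mul, ← two_smul ℚ a, ← neg_smul, smul_smul]
  norm_num

lemma eq_third_smul {A : Type*} [CommRing A] [Algebra ℚ A] {a b z : A}
    (h : z = 3 * b - 2 * a) : b = (1 / 3 : ℚ) • (z + (2 : ℚ) • a) := by
  have h3 : z + (2 : ℚ) • a = (3 : ℚ) • b := by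
    rw [h, Algebra.smul_def, Algebra.smul_def, map_ofNat, map_ofNat]
    ring
  rw [h3, smul_smul]
  norm_num

lemma e2_mem : e2 ∈ Algebra.adjoin ℚ ({z1, z2} : Set Rq) := by
  have h : e2 = (-1 / 2 : ℚ) • z1 := eq_neg_half_smul z1_eq
  rw [h]
  exact Subalgebra.smul_mem _ (Algebra.subset_adjoin (by simp)) _

lemma e3_sq_mem : e3 ^ 2 ∈ Algebra.adjoin ℚ ({z1, z2} : Set Rq) := by
  have h : e3 ^ 2 = (1 / 3 : ℚ) • (z2 + (2 : ℚ) • e2 ^ 3) := eq_third_smul z2_eq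
  rw [h]
  exact Subalgebra.smul_mem _ (add_mem (Algebra.subset_adjoin (by simp))
    (Subalgebra.smul_mem _ (pow_mem e2_mem 3) _)) _

/-- `ℚ[e₂, e₃] = ℚ[z₁, z₂] + e₃ ℚ[z₁, z₂]`, because `e₂` and `e₃²` lie in `ℚ[z₁, z₂]`. -/
lemma exists_decomp {r : Rq} (hr : r ∈ Algebra.adjoin ℚ ({e2, e3} : Set Rq)) :
    ∃ A ∈ Algebra.adjoin ℚ ({z1, z2} : Set Rq), ∃ B ∈ Algebra.adjoin ℚ ({z1, z2} : Set Rq),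
      r = A + e3 * B := by
  induction hr using Algebra.adjoin_induction with
  | mem x hx =>
    rcases hx with rfl | rfl
    · exact ⟨e2, e2_mem, 0, zero_mem _, by ring⟩
    · exact ⟨0, zero_mem _, 1, one_mem _, by ring⟩
  | algebraMap q => exact ⟨_, Subalgebra.algebraMap_mem _ q, 0, zero_mem _, by ring⟩
  | add x y _ _ hx hy =>
    obtain ⟨A, hA, B, hB, rfl⟩ := hx
    obtain ⟨A', hA', B', hB', rfl⟩ := hy
    exact ⟨A + A', add_mem hA hA', B + B', add_mem hB hB', by ring⟩
  | mul x y _ _ hx hy =>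
    obtain ⟨A, hA, B, hB, rfl⟩ := hx
    obtain ⟨A', hA', B', hB', rfl⟩ := hy
    exact ⟨A * A' + e3 ^ 2 * (B * B'),
      add_mem (mul_mem hA hA') (mul_mem e3_sq_mem (mul_mem hB hB')),
      A * B' + B * A', add_mem (mul_mem hA hB') (mul_mem hB hA'), by ring⟩

/-! ### Permutation invariants -/

lemma mkR_mem_of_isSymmetric {p : P3} (hp : p.IsSymmetric) :
    mkR p ∈ Algebra.adjoin ℚ ({e2, e3} : Set Rq) := by
  obtain ⟨g, hg⟩ := esymmAlgHom_surjective (σ := Fin 3) (n := 3) ℚ (by simp)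
    (⟨p, hp⟩ : symmetricSubalgebra (Fin 3) ℚ)
  have hpg : p = aeval (fun i : Fin 3 ↦ esymm (Fin 3) ℚ (i + 1)) g := by
    rw [← esymmAlgHom_apply, hg]
  rw [hpg]
  have h1 : mkR (esymm (Fin 3) ℚ 1) = 0 := by
    rw [esymm_one, Fin.sum_univ_three, map_add, map_add, mkR_sum]
  have h2 : mkR (esymm (Fin 3) ℚ 2) = e2 := by
    have h : Finset.powersetCard 2 (Finset.univ : Finset (Fin 3)) = {{0, 1}, {0, 2}, {1, 2}} := by
      decide
    rw [esymm, h, e2, Finset.sum_insert (by decide), Finset.sum_insert (by decide)]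
    simp [add_assoc]
  have h3 : mkR (esymm (Fin 3) ℚ 3) = e3 := by
    have h : Finset.powersetCard 3 (Finset.univ : Finset (Fin 3)) = {Finset.univ} := by
      decide
    rw [esymm, h, e3, Finset.sum_singleton, Fin.prod_univ_three]
  have key : ∀ i : Fin 3, mkR (esymm (Fin 3) ℚ (i + 1)) ∈
      Algebra.adjoin ℚ ({e2, e3} : Set Rq) := by
    intro i
    fin_cases i
    · simp only [zero_add]
      rw [h1]
      exact zero_mem _
    · simp only [Nat.reduceAdd]
      rw [h2]
      exact Algebra.subset_adjoin (by simp)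
    · simp only [Nat.reduceAdd]
      rw [h3]
      exact Algebra.subset_adjoin (by simp)
  clear hpg hg
  induction g using MvPolynomial.induction_on with
  | C a =>
    rw [aeval_C, AlgHom.commutes]
    exact Subalgebra.algebraMap_mem _ a
  | add p q hp hq =>
    rw [map_add, map_add]
    exact add_mem hp hq
  | mul_X p i hp =>
    rw [map_mul, map_mul, aeval_X]
    exact mul_mem hp (key i)

/-- A permutation-invariant element of `R` is the class of the `S₃`-average of any lift, which is
a symmetric polynomial. -/
lemma mem_of_permRq {r : Rq} (hr : ∀ σ, permRq σ r = r) :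
    r ∈ Algebra.adjoin ℚ ({e2, e3} : Set Rq) := by
  obtain ⟨p, rfl⟩ := mkR_surjective r
  have hsymm : (∑ σ : Equiv.Perm (Fin 3), rename σ p).IsSymmetric := by
    intro τ
    rw [map_sum]
    refine Fintype.sum_equiv (Equiv.mulLeft τ) _ _ fun σ => ?_
    rw [rename_rename]
    rfl
  have hmk : mkR (∑ σ : Equiv.Perm (Fin 3), rename σ p) = (6 : ℚ) • mkR p := by
    rw [map_sum, Finset.sum_congr rfl fun σ _ => (permRq_mkR σ p).symm.trans (hr σ),
      Finset.sum_const, Finset.card_univ, Fintype.card_perm, Fintype.card_fin,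
      ← Nat.cast_smul_eq_nsmul ℚ]
    norm_num [Nat.factorial]
  have h := Subalgebra.smul_mem _ (mkR_mem_of_isSymmetric hsymm) (1 / 6 : ℚ)
  rw [hmk, smul_smul] at h
  norm_num at h
  exact h

/-! ### Algebraic independence -/

/-- Every pair of complex numbers is the value of `(z₁, z₂)` at some `ℂ`-point of `R`. -/
lemma exists_point (u v : ℂ) : ∃ φ : Rq →ₐ[ℚ] ℂ, φ z1 = u ∧ φ z2 = v := by
  -- The target values of `e₂` and `e₃`.
  obtain ⟨a, ha⟩ : ∃ a : ℂ, -2 * a = u := ⟨-u / 2, by ring⟩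
  obtain ⟨b, hb⟩ := IsAlgClosed.exists_pow_nat_eq ((v + 2 * a ^ 3) / 3) (n := 2) (by norm_num)
  -- A root `x` of the cubic, then a root `y` of the quadratic cofactor; the third is `-x - y`.
  obtain ⟨x, hx⟩ : ∃ x : ℂ, x ^ 3 + a * x - b = 0 := by
    have hd : (Polynomial.X ^ 3 + Polynomial.C a * Polynomial.X - Polynomial.C b).degree = 3 := by
      compute_degree!
    obtain ⟨x, hx⟩ := IsAlgClosed.exists_root
      (Polynomial.X ^ 3 + Polynomial.C a * Polynomial.X - Polynomial.C b)
      (by rw [hd]; decide)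
    exact ⟨x, by simpa [Polynomial.IsRoot] using hx⟩
  obtain ⟨y, hy⟩ : ∃ y : ℂ, y ^ 2 + x * y + (a + x ^ 2) = 0 := by
    obtain ⟨s, hs⟩ := IsAlgClosed.exists_pow_nat_eq (x ^ 2 - 4 * (a + x ^ 2)) (n := 2)
      (by norm_num)
    exact ⟨(s - x) / 2, by linear_combination hs / 4⟩
  have hI : ∀ p ∈ I1, aeval (R := ℚ) ![x, y, -x - y] p = 0 := by
    have hle : I1 ≤ RingHom.ker (aeval (R := ℚ) ![x, y, -x - y]) := by
      rw [I1, Ideal.span_le, Set.singleton_subset_iff, SetLike.mem_coe, RingHom.mem_ker]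
      simp
    exact fun p hp => hle hp
  have hφ : ∀ p, Ideal.Quotient.liftₐ I1 (aeval (R := ℚ) ![x, y, -x - y]) hI (mkR p) =
      aeval (R := ℚ) ![x, y, -x - y] p := fun p => rfl
  have h2 : x * y + (x + y) * (-x - y) = a := by linear_combination -hy
  have h3 : x * y * (-x - y) = b := by linear_combination hx - x * hy
  refine ⟨Ideal.Quotient.liftₐ I1 (aeval (R := ℚ) ![x, y, -x - y]) hI, ?_, ?_⟩
  · rw [z1, hφ]
    simp only [map_add, map_pow, aeval_X, Matrix.cons_val]
    rw [← ha, ← h2]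
    ring
  · rw [z2, hφ]
    simp only [map_add, map_pow, aeval_X, Matrix.cons_val]
    have hv : v = 3 * b ^ 2 - 2 * a ^ 3 := by linear_combination -3 * hb
    rw [hv, ← h2, ← h3]
    ring

lemma algebraicIndependent_z : AlgebraicIndependent ℚ ![z1, z2] := by
  rw [algebraicIndependent_iff]
  intro f hf
  apply map_injective (algebraMap ℚ ℂ) (algebraMap ℚ ℂ).injective
  rw [map_zero]
  refine MvPolynomial.funext fun c => ?_
  obtain ⟨φ, h1, h2⟩ := exists_point (c 0) (c 1)
  have hc : c = fun i => φ (![z1, z2] i) := by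
    ext i
    fin_cases i
    · exact h1.symm
    · exact h2.symm
  have h : φ (aeval ![z1, z2] f) = aeval (fun i => φ (![z1, z2] i)) f :=
    (DFunLike.congr_fun (comp_aeval ![z1, z2] φ) f :)
  rw [map_zero, eval_map, ← aeval_def, hc, ← h, hf, map_zero]

/-- For the `D₆`-action on `R = ℚ[x,y,w]/(x+y+w)` in which the subgroup
`⟨a²,b⟩ ≅ S₃` permutes the variables `x, y, w` and the central element `a³` multiplies each
variable by `−1` (so that the `D₆`-invariants are exactly the elements fixed by all the
permutation automorphisms and by the sign automorphism), the invariant subalgebra `R^{D₆}`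
is a polynomial algebra on `z₁ = x²+y²+w²` and `z₂ = x⁶+y⁶+w⁶`: it equals the
ℚ-subalgebra of `R` generated by `z₁` and `z₂`, and `z₁, z₂` are algebraically independent
over ℚ. -/
theorem invariants_polynomial_on_z1_z2 :
    ({r : Rq | (∀ σ : Equiv.Perm (Fin 3), permRq σ r = r) ∧ negRq r = r} =
      ↑(Algebra.adjoin ℚ ({z1, z2} : Set Rq))) ∧
    AlgebraicIndependent ℚ ![z1, z2] := by
  refine ⟨Set.ext fun r => ⟨?_, fun hr => ⟨fun σ => permRq_of_mem σ hr, negRq_of_mem hr⟩⟩,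
    algebraicIndependent_z⟩
  rintro ⟨hperm, hneg⟩
  obtain ⟨A, hA, B, hB, rfl⟩ := exists_decomp (mem_of_permRq hperm)
  rw [map_add, map_mul, negRq_of_mem hA, negRq_of_mem hB, negRq_e3] at hneg
  have h0 : (2 : ℚ) • (e3 * B) = 0 := by
    rw [two_smul]
    linear_combination -hneg
  rw [(smul_eq_zero_iff_right (by norm_num : (2 : ℚ) ≠ 0)).mp h0, add_zero]
  exact hA

end
end

section
/- For every integer m ≥ 1, the invariant subalgebra K(m)^{D₆} equals the ℚ-subalgebra of K(m) generated by the set {z(3−|I|, I) : I ⊆ {1,…,m}, |I| ≤ 2} ∪ {z(7−|I|, I) : I ⊆ {1,…,m}, |I| ≤ 6}. -/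
/-!
Write `φ_k` for the triple `x, y, w` (when `k = none`) or `α_j, β_j, γ_j` (when `k = some j`). The
entries of each triple add up to `0`, entries of two triples commute up to a sign depending only on
the triples, and together they generate `K(m)`. The group `D₆` permutes each triple through `S₃`
and changes all signs through `a³`. These properties alone carry the proof; the other two relations
of `J` play no role.

After extension of scalars to `ℂ`, let `ω` be a primitive cube root of unity and let `s_k`, `t_k` be
the eigenvectors of the cyclic rotation in the span of `φ_k`, with eigenvalues `ω` and `ω²`. A
transposition exchanges `s_k` and `t_k`. A word in these letters is therefore an eigenvector of the
rotation and of the sign change, and averaging over `D₆` (`mem_of_fixed`) shows that the invariants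
are spanned by the symmetrized words `T(w) = w + w'`, with `w'` obtained from `w` by exchanging `s`
and `t`, where `w` has even length and `#s + 2 #t` is divisible by `3`. Equivalently, `#s - #t` is
divisible by `6`.

Let `S` be the subalgebra generated by the polarized power sums `∑ᵢ φ_{k₁}(i) ⋯ φ_{k_r}(i)` of
degrees `r = 2` and `r = 6`. By orthogonality of characters (`two_smul_powerSum`), those of degree
two give all `T(s_k t_l)`. The identity `T(s_k t_l) T(w) = T(s_k t_l w) + T(t_k s_l w)`, applied to
the three pairs among three positions, shows by induction on the length that `T(w) ∈ S` whenever
both letter types occur in `w` (`symMono_mem_of_mixed`). Modulo such words, the power sums of degree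
six give `T(s⋯s)` for words of length six, and a longer word `u v` of type `s⋯s` splits by
`T(u) T(v) = T(u v) + T(u v')`. So `T(w) ∈ S` for every relevant word (`symMono_mem`), and a linear
retraction of `ℂ` onto `ℚ` descends this to `K(m)` (`mem_of_fixed_rat`).

Up to sign, every polarized power sum of degree `r` is `0` or some `z(r + 1 - |I|, I)` with
`|I| ≤ r` (`exists_powerSum_eq_zz`), which identifies the generators of `S`.
-/

set_option synthInstance.maxHeartbeats 1000000
set_option maxHeartbeats 1000000

open MvPolynomial
open scoped TensorProduct

noncomputable section

def Jid : Ideal P3 :=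
  Ideal.span {X 0 + X 1 + X 2, X 0 ^ 2 + X 1 ^ 2 + X 2 ^ 2, X 0 ^ 6 + X 1 ^ 6 + X 2 ^ 6}

abbrev Aq : Type := P3 ⧸ Jid

def mkA : P3 →ₐ[ℚ] Aq := Ideal.Quotient.mkₐ ℚ Jid

lemma rename_sum_pow (σ : Equiv.Perm (Fin 3)) (k : ℕ) :
    rename σ ((X 0 : P3) ^ k + X 1 ^ k + X 2 ^ k) = (X 0 : P3) ^ k + X 1 ^ k + X 2 ^ k := by
  have h : ((X 0 : P3) ^ k + X 1 ^ k + X 2 ^ k) = ∑ i, (X i : P3) ^ k := by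
    simp [Fin.sum_univ_three]
  rw [h, map_sum]
  simp only [map_pow, rename_X]
  exact Fintype.sum_equiv σ _ _ fun i => rfl

lemma rename_mem_J (σ : Equiv.Perm (Fin 3)) {p : P3} (hp : p ∈ Jid) :
    rename σ p ∈ Jid := by
  have hle : Jid.map (rename σ : P3 →ₐ[ℚ] P3).toRingHom ≤ Jid := by
    rw [Jid, Ideal.map_span, Ideal.span_le]
    rintro q ⟨r, hr, rfl⟩
    simp only [Set.mem_insert_iff, Set.mem_singleton_iff] at hr
    have h1 := rename_sum_pow σ 1
    simp only [pow_one] at h1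
    rcases hr with rfl | rfl | rfl
    · exact Ideal.subset_span (by simp only [AlgHom.toRingHom_eq_coe, RingHom.coe_coe, h1]; left; rfl)
    · exact Ideal.subset_span (by
        simp only [AlgHom.toRingHom_eq_coe, RingHom.coe_coe, rename_sum_pow σ 2]
        right; left; rfl)
    · exact Ideal.subset_span (by
        simp only [AlgHom.toRingHom_eq_coe, RingHom.coe_coe, rename_sum_pow σ 6]
        right; right; rfl)
  exact hle (Ideal.mem_map_of_mem _ hp)

def permAq (σ : Equiv.Perm (Fin 3)) : Aq →ₐ[ℚ] Aq :=
  Ideal.Quotient.liftₐ Jid (mkA.comp (rename σ)) (fun p hp => by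
    simp only [AlgHom.comp_apply, mkA, Ideal.Quotient.mkₐ_eq_mk]
    exact Ideal.Quotient.eq_zero_iff_mem.mpr (rename_mem_J σ hp))

lemma negP_mem_J {p : P3} (hp : p ∈ Jid) : negP p ∈ Jid := by
  have hle : Jid.map negP.toRingHom ≤ Jid := by
    rw [Jid, Ideal.map_span, Ideal.span_le]
    rintro q ⟨r, hr, rfl⟩
    simp only [Set.mem_insert_iff, Set.mem_singleton_iff] at hr
    rcases hr with rfl | rfl | rfl
    · have : negP ((X 0 : P3) + X 1 + X 2) = -(X 0 + X 1 + X 2) := by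
        simp [negP]; try ring
      simp only [AlgHom.toRingHom_eq_coe, RingHom.coe_coe, this]
      exact neg_mem (Ideal.subset_span (by left; rfl))
    · have : negP ((X 0 : P3) ^ 2 + X 1 ^ 2 + X 2 ^ 2) = X 0 ^ 2 + X 1 ^ 2 + X 2 ^ 2 := by
        simp [negP]; try ring
      simp only [AlgHom.toRingHom_eq_coe, RingHom.coe_coe, this]
      exact Ideal.subset_span (by right; left; rfl)
    · have : negP ((X 0 : P3) ^ 6 + X 1 ^ 6 + X 2 ^ 6) = X 0 ^ 6 + X 1 ^ 6 + X 2 ^ 6 := by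
        simp [negP]; try ring
      simp only [AlgHom.toRingHom_eq_coe, RingHom.coe_coe, this]
      exact Ideal.subset_span (by right; right; rfl)
  exact hle (Ideal.mem_map_of_mem _ hp)

def negAq : Aq →ₐ[ℚ] Aq :=
  Ideal.Quotient.liftₐ Jid (mkA.comp negP) (fun p hp => by
    simp only [AlgHom.comp_apply, mkA, Ideal.Quotient.mkₐ_eq_mk]
    exact Ideal.Quotient.eq_zero_iff_mem.mpr (negP_mem_J hp))

def Vsub : Submodule ℚ (Fin 3 → ℚ) := Submodule.span ℚ {fun _ => (1 : ℚ)}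

abbrev Vq : Type := (Fin 3 → ℚ) ⧸ Vsub

def vGen (i : Fin 3) : Vq := Submodule.Quotient.mk (Pi.single i 1)

abbrev Em (m : ℕ) : Type := ExteriorAlgebra ℚ (Fin m → Vq)

def eGen (m : ℕ) (j : Fin m) (i : Fin 3) : Em m :=
  ExteriorAlgebra.ι ℚ (Pi.single j (vGen i))

def prodGen (m : ℕ) (i : Fin 3) (I : Finset (Fin m)) : Em m :=
  ((I.sort (· ≤ ·)).map (fun j => eGen m j i)).prod

def extHom {m : ℕ} (g : (Fin m → Vq) →ₗ[ℚ] (Fin m → Vq)) : Em m →ₐ[ℚ] Em m :=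
  ExteriorAlgebra.lift ℚ ⟨(ExteriorAlgebra.ι ℚ).comp g, fun v => by
    simpa using ExteriorAlgebra.ι_sq_zero (g v)⟩

def permV (σ : Equiv.Perm (Fin 3)) : Vq →ₗ[ℚ] Vq :=
  Submodule.mapQ Vsub Vsub (LinearMap.funLeft ℚ ℚ ⇑σ⁻¹) (by
    rw [Vsub, Submodule.span_le]
    rintro v rfl
    exact Submodule.mem_comap.mpr (Submodule.subset_span rfl))

abbrev Kk (m : ℕ) : Type := Aq ⊗[ℚ] Em m

def zz (m : ℕ) (d : ℕ) (I : Finset (Fin m)) : Kk m :=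
  mkA (X 0 ^ d) ⊗ₜ[ℚ] prodGen m 0 I + mkA (X 1 ^ d) ⊗ₜ[ℚ] prodGen m 1 I +
    mkA (X 2 ^ d) ⊗ₜ[ℚ] prodGen m 2 I

def zS (m : ℕ) (i : ℕ) (I : Finset (Fin m)) : Kk m := zz m (i - 1) I

/-- The algebra endomorphism of `K(m)` given by the element of `S₃ ⊆ D₆` corresponding to
the permutation `σ`: it simultaneously permutes `(x,y,w)` and each triple `(α_j,β_j,γ_j)`. -/
def permK (m : ℕ) (σ : Equiv.Perm (Fin 3)) : Kk m →ₐ[ℚ] Kk m :=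
  Algebra.TensorProduct.map (permAq σ) (extHom (LinearMap.compLeft (permV σ) (Fin m)))

/-- The algebra endomorphism of `K(m)` given by the central element `a³` of `D₆`: it
multiplies each of `x, y, w, α_j, β_j, γ_j` by `−1`. -/
def negK (m : ℕ) : Kk m →ₐ[ℚ] Kk m :=
  Algebra.TensorProduct.map negAq (extHom (-LinearMap.id))

/-- The set of `D₆`-invariants of `K(m)`: since `D₆` is generated by the subgroup
`⟨a²,b⟩ ≅ S₃` together with the central element `a³`, these are the elements fixed by all
the simultaneous permutations and by the sign automorphism. -/
def invD6 (m : ℕ) : Set (Kk m) :=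
  {z | (∀ σ : Equiv.Perm (Fin 3), permK m σ z = z) ∧ negK m z = z}

/-- The set of `S₃`-invariants of `K(m)`, for the subgroup `⟨a²,b⟩ ≅ S₃` of `D₆`. -/
def invS3 (m : ℕ) : Set (Kk m) :=
  {z | ∀ σ : Equiv.Perm (Fin 3), permK m σ z = z}

namespace Dihedral

/-! ### Words in two types of letters -/

/-- If `h e a * h e b = c • (h e b * h e a)` with `c` independent of `e`, then permuting the
factors of a product multiplies it by a scalar independent of `e`. -/
theorem exists_smul_prod_of_perm {k A α E : Type*} [CommRing k] [Ring A] [Algebra k A]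
    (h : E → α → A) (hc : ∀ a b, ∃ c : k, ∀ e, h e a * h e b = c • (h e b * h e a))
    {w w' : List α} (p : w.Perm w') :
    ∃ c : k, ∀ e, (w.map (h e)).prod = c • (w'.map (h e)).prod := by
  induction p with
  | nil => exact ⟨1, fun e => by simp⟩
  | cons a _ ih =>
    obtain ⟨c, hc'⟩ := ih
    exact ⟨c, fun e => by simp [hc' e]⟩
  | swap a b l =>
    obtain ⟨c, hc'⟩ := hc b a
    exact ⟨c, fun e => by simp [← mul_assoc, hc' e]⟩
  | trans _ _ ih₁ ih₂ =>
    obtain ⟨c, hc⟩ := ih₁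
    obtain ⟨d, hd⟩ := ih₂
    exact ⟨c * d, fun e => by rw [hc, hd, smul_smul]⟩

theorem exists_perm_cons_of_countP {α : Type*} (p : α → Bool) {w : List α} (h : 0 < w.countP p) :
    ∃ a w', p a = true ∧ w.Perm (a :: w') := by
  obtain ⟨a, ha, hp⟩ := List.countP_pos_iff.mp h
  obtain ⟨l, r, rfl⟩ := List.append_of_mem ha
  exact ⟨a, l ++ r, hp, List.perm_middle⟩

section Words

variable {F R ι : Type*} [Field F] [Ring R] [Algebra F R]

/-- The monomial attached to a word in the letters `(k, true)` (standing for `s_k = g k true`) and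
`(k, false)` (standing for `t_k = g k false`); when `e` is `true`, the roles of `s` and `t` are
exchanged. -/
def mono (g : ι → Bool → R) (e : Bool) (w : List (ι × Bool)) : R :=
  (w.map fun a => g a.1 (a.2 ^^ e)).prod

/-- The sum of a monomial and of its image under the exchange of `s` and `t`. -/
def symMono (g : ι → Bool → R) (w : List (ι × Bool)) : R := mono g false w + mono g true w

/-- The word obtained by exchanging `s` and `t`. -/
def flipWord (w : List (ι × Bool)) : List (ι × Bool) := w.map fun a => (a.1, !a.2)

/-- Number of letters `s` in a word. -/
def pos (w : List (ι × Bool)) : ℕ := w.countP fun a => a.2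

/-- Number of letters `t` in a word. -/
def neg (w : List (ι × Bool)) : ℕ := w.countP fun a => !a.2

@[simp] theorem pos_nil : pos ([] : List (ι × Bool)) = 0 := rfl
@[simp] theorem neg_nil : neg ([] : List (ι × Bool)) = 0 := rfl
@[simp] theorem pos_cons_true (k : ι) (w : List (ι × Bool)) : pos ((k, true) :: w) = pos w + 1 := by
  simp [pos]
@[simp] theorem pos_cons_false (k : ι) (w : List (ι × Bool)) : pos ((k, false) :: w) = pos w := by
  simp [pos]
@[simp] theorem neg_cons_true (k : ι) (w : List (ι × Bool)) : neg ((k, true) :: w) = neg w := by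
  simp [neg]
@[simp] theorem neg_cons_false (k : ι) (w : List (ι × Bool)) :
    neg ((k, false) :: w) = neg w + 1 := by
  simp [neg]
theorem pos_perm {w w' : List (ι × Bool)} (p : w.Perm w') : pos w = pos w' := p.countP_eq _
theorem neg_perm {w w' : List (ι × Bool)} (p : w.Perm w') : neg w = neg w' := p.countP_eq _
theorem pos_append (w w' : List (ι × Bool)) : pos (w ++ w') = pos w + pos w' := by simp [pos]
theorem neg_append (w w' : List (ι × Bool)) : neg (w ++ w') = neg w + neg w' := by simp [neg]

theorem length_eq (w : List (ι × Bool)) : w.length = pos w + neg w := by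
  induction w with
  | nil => rfl
  | cons a w ih => obtain ⟨k, b⟩ := a; cases b <;> simp [ih] <;> omega

@[simp] theorem pos_flip (w : List (ι × Bool)) : pos (flipWord w) = neg w := by
  simp [pos, neg, flipWord, List.countP_map, Function.comp_def]
@[simp] theorem neg_flip (w : List (ι × Bool)) : neg (flipWord w) = pos w := by
  simp [pos, neg, flipWord, List.countP_map, Function.comp_def]

theorem mono_flip (g : ι → Bool → R) (e : Bool) (w : List (ι × Bool)) :
    mono g e (flipWord w) = mono g (!e) w := by
  simp [mono, flipWord, List.map_map, Function.comp_def]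

theorem symMono_flip (g : ι → Bool → R) (w : List (ι × Bool)) :
    symMono g (flipWord w) = symMono g w := by
  simp [symMono, mono_flip, add_comm]

theorem mono_append (g : ι → Bool → R) (e : Bool) (w w' : List (ι × Bool)) :
    mono g e (w ++ w') = mono g e w * mono g e w' := by
  simp [mono]

theorem mono_cons (g : ι → Bool → R) (e : Bool) (a : ι × Bool) (w : List (ι × Bool)) :
    mono g e (a :: w) = g a.1 (a.2 ^^ e) * mono g e w := by
  simp [mono]

theorem mono_nil (g : ι → Bool → R) (e : Bool) : mono g e [] = 1 := rfl

/-- All words whose sequence of indices is `ks`. -/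
def words : List ι → List (List (ι × Bool))
  | [] => [[]]
  | k :: ks => (words ks).map (List.cons (k, true)) ++ (words ks).map (List.cons (k, false))

theorem length_of_mem_words {ks : List ι} {w : List (ι × Bool)} (h : w ∈ words ks) :
    w.length = ks.length := by
  induction ks generalizing w with
  | nil => simp_all [words]
  | cons k ks ih =>
    simp only [words, List.mem_append, List.mem_map] at h
    rcases h with ⟨v, hv, rfl⟩ | ⟨v, hv, rfl⟩ <;> simp [ih hv]

theorem prod_eq_sum_words (g : ι → Bool → R) (e : Bool) (u v : F) (ks : List ι) :
    (ks.map fun k => u • g k (!e) + v • g k e).prod =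
      ((words ks).map fun w => (u ^ pos w * v ^ neg w) • mono g e w).sum := by
  induction ks with
  | nil => simp [words, mono]
  | cons k ks ih =>
    simp only [List.map_cons, List.prod_cons, ih, words, List.map_append, List.sum_append,
      List.map_map, Function.comp_def, add_mul, mono_cons, pos_cons_true, neg_cons_true,
      pos_cons_false, neg_cons_false, Bool.true_xor, Bool.false_xor, ← List.sum_map_mul_left,
      List.sum_map_add]
    congr 1 <;> refine congrArg _ (List.map_congr_left fun w _ => ?_) <;>
      rw [smul_mul_smul_comm] <;> congr 1 <;> ring

/-- A sum over all words on `ks` reduces, modulo a submodule containing the terms of all words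
in which the letter type `!b` occurs, to the term of the constant word of type `b`. -/
theorem sum_words_sub_mem {S : Submodule F R} (b : Bool) (ks : List ι) (f : List (ι × Bool) → R)
    (hf : ∀ w ∈ words ks, (∃ a ∈ w, a.2 = !b) → f w ∈ S) :
    ((words ks).map f).sum - f (ks.map fun k => (k, b)) ∈ S := by
  induction ks generalizing f with
  | nil => simp [words]
  | cons k ks ih =>
    have h1 := ih (fun w => f ((k, b) :: w)) (fun w hw ⟨a, ha, hab⟩ =>
      hf _ (by cases b <;> simp [words, hw]) ⟨a, List.mem_cons_of_mem _ ha, hab⟩)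
    have h2 : ((words ks).map fun w => f ((k, !b) :: w)).sum ∈ S :=
      S.list_sum_mem (by
        simp only [List.mem_map]
        rintro _ ⟨w, hw, rfl⟩
        exact hf _ (by cases b <;> simp [words, hw]) ⟨_, List.mem_cons_self, rfl⟩)
    have h3 := add_mem h1 h2
    cases b <;> simp only [words, List.map_append, List.map_map, List.sum_append, List.map_cons,
      Function.comp_def, Bool.not_true, Bool.not_false] at h3 ⊢ <;> convert h3 using 1 <;> abel

/-- The character sum `1 + ωⁿ + ω²ⁿ`, where `n` is the weight `pos w + 2 * neg w` of `w`. -/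
def chi (ω : F) (w : List (ι × Bool)) : F :=
  1 + ω ^ (pos w + 2 * neg w) + (ω ^ 2) ^ (pos w + 2 * neg w)

theorem cube_eq_one {ω : F} (hω : 1 + ω + ω ^ 2 = 0) : ω ^ 3 = 1 := by
  linear_combination (ω - 1) * hω

theorem chi_of_dvd {ω : F} (hω : 1 + ω + ω ^ 2 = 0) {w : List (ι × Bool)}
    (h : 3 ∣ pos w + 2 * neg w) : chi ω w = 3 := by
  obtain ⟨n, hn⟩ := h
  rw [chi, hn, ← pow_mul, mul_left_comm, pow_mul, pow_mul, cube_eq_one hω]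
  norm_num

theorem chi_of_not_dvd {ω : F} (hω : 1 + ω + ω ^ 2 = 0) {w : List (ι × Bool)}
    (h : ¬ 3 ∣ pos w + 2 * neg w) : chi ω w = 0 := by
  have h3 := cube_eq_one hω
  rw [chi]
  generalize pos w + 2 * neg w = n at h
  obtain ⟨q, r, hr, rfl⟩ : ∃ q r, (r = 1 ∨ r = 2) ∧ n = 3 * q + r :=
    ⟨n / 3, n % 3, by omega, by omega⟩
  have e : ω ^ (3 * q + r) = ω ^ r := by rw [pow_add, pow_mul, h3]; simp
  rw [← pow_mul, mul_comm 2, pow_mul, e]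
  rcases hr with rfl | rfl
  · linear_combination hω
  · linear_combination hω + ω * h3

/-- The polarized power sum `∑ᵢ ∏ₖ (ωⁱ s_k + ω²ⁱ t_k)` over `i = 0, 1, 2`. -/
def powerSum (ω : F) (g : ι → Bool → R) (ks : List ι) : R :=
  (ks.map fun k => g k true + g k false).prod +
  (ks.map fun k => ω • g k true + ω ^ 2 • g k false).prod +
  (ks.map fun k => ω ^ 2 • g k true + ω • g k false).prod

/-- Orthogonality of characters: only words of weight divisible by `3` contribute to the
polarized power sum. -/
theorem two_smul_powerSum {ω : F} (hω : 1 + ω + ω ^ 2 = 0) (g : ι → Bool → R) (ks : List ι) :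
    (2 : F) • powerSum ω g ks = ((words ks).map fun w => chi ω w • symMono g w).sum := by
  have h3 := cube_eq_one hω
  -- Both the expansion of the power sum and its image under `s ↔ t` (`ω ↔ ω²`) are used.
  have key : ∀ e, powerSum ω g ks = ((words ks).map fun w => chi ω w • mono g e w).sum := by
    intro e
    have E := fun u v : F => prod_eq_sum_words g e u v ks
    have hs : powerSum ω g ks = (ks.map fun k => (1 : F) • g k (!e) + (1 : F) • g k e).prod +
        (ks.map fun k => ω • g k (!e) + ω ^ 2 • g k e).prod +
        (ks.map fun k => ω ^ 2 • g k (!e) + ω • g k e).prod := by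
      cases e
      · simp [powerSum]
      · simp only [powerSum, Bool.not_true, one_smul, add_comm (g _ false),
          add_comm (_ • g _ false)]
        abel
    rw [hs, E, E, E, ← List.sum_map_add, ← List.sum_map_add]
    refine congrArg _ (List.map_congr_left fun w _ => ?_)
    rw [← add_smul, ← add_smul, chi]
    have h4 : ω ^ neg w = (ω ^ 2) ^ (2 * neg w) := by
      rw [← pow_mul, show 2 * (2 * neg w) = 3 * neg w + neg w by ring, pow_add, pow_mul, h3]
      simp
    rw [h4, pow_add, pow_add, pow_mul ω 2]
    simp
  rw [two_smul]
  nth_rw 1 [key false]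
  rw [key true, ← List.sum_map_add]
  simp [symMono, smul_add]

/-! ### Decomposing words with both letter types -/

section Membership

variable {S : Subalgebra F R} {g : ι → Bool → R}
  (hg : ∀ k l, ∃ c : F, ∀ a b, g k a * g l b = c • (g l b * g k a))

include hg

theorem symMono_mem_of_perm {w w' : List (ι × Bool)} (p : w.Perm w') (h : symMono g w' ∈ S) :
    symMono g w ∈ S := by
  obtain ⟨c, hc⟩ := exists_smul_prod_of_perm (k := F)
    (fun (e : Bool) (a : ι × Bool) => g a.1 (a.2 ^^ e))
    (fun a b => (hg a.1 b.1).imp fun c hc e => hc _ _) p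
  have : symMono g w = c • symMono g w' := by
    simp only [symMono, mono, hc, smul_add]
  exact this ▸ S.smul_mem h c

omit hg in
/-- `q(k,l) * T(w) = T(s_k t_l w) + T(t_k s_l w)`, where `q(k,l) = T(s_k t_l)`. -/
theorem exchange_mem (h2 : ∀ k l, symMono g [(k, true), (l, false)] ∈ S) (k l : ι)
    {w : List (ι × Bool)} (hw : symMono g w ∈ S) :
    symMono g ((k, true) :: (l, false) :: w) + symMono g ((k, false) :: (l, true) :: w) ∈ S := by
  convert S.mul_mem (h2 k l) hw using 1
  simp only [symMono, mono_cons, mono_nil, Bool.xor_false, Bool.xor_true,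
    Bool.not_true, Bool.not_false]
  noncomm_ring

variable [CharZero F]

/-- A word with at least two letters `s` and one letter `t` is decomposable: any two of the three
placements of the letter `t` among three given positions add up to a decomposable element. -/
theorem symMono_mem_of_two_one (h2 : ∀ k l, symMono g [(k, true), (l, false)] ∈ S)
    (k l n : ι) {w : List (ι × Bool)} (hw : ∀ k, symMono g ((k, true) :: w) ∈ S) :
    symMono g ((k, true) :: (l, false) :: (n, true) :: w) ∈ S := by
  have swap : ∃ c : F, ∀ a b d, symMono g ((k, a) :: (l, b) :: (n, d) :: w) =
      c • symMono g ((k, a) :: (n, d) :: (l, b) :: w) := by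
    obtain ⟨c, hc⟩ := hg l n
    refine ⟨c, fun a b d => ?_⟩
    simp only [symMono, mono_cons, smul_add]
    congr 1 <;> rw [← mul_assoc (g l _), hc, smul_mul_assoc, mul_smul_comm, mul_assoc (g n _)]
  have rot : ∃ c : F, ∀ a b d, symMono g ((k, a) :: (l, b) :: (n, d) :: w) =
      c • symMono g ((l, b) :: (n, d) :: (k, a) :: w) := by
    obtain ⟨c, hc⟩ := hg k l
    obtain ⟨c', hc'⟩ := hg k n
    refine ⟨c * c', fun a b d => ?_⟩
    simp only [symMono, mono_cons, smul_add]
    congr 1 <;> rw [← mul_assoc (g k _), hc, smul_mul_assoc, mul_assoc (g l _),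
      ← mul_assoc (g k _), hc', smul_mul_assoc, mul_smul_comm, smul_smul, mul_assoc (g n _)]
  have XY := exchange_mem h2 k l (hw n)
  have YZ : symMono g ((k, false) :: (l, true) :: (n, true) :: w) +
      symMono g ((k, true) :: (l, true) :: (n, false) :: w) ∈ S := by
    obtain ⟨c, hc⟩ := swap
    rw [hc, hc, ← smul_add, add_comm]
    exact S.smul_mem (exchange_mem h2 k n (hw l)) c
  have XZ : symMono g ((k, true) :: (l, false) :: (n, true) :: w) +
      symMono g ((k, true) :: (l, true) :: (n, false) :: w) ∈ S := by
    obtain ⟨c, hc⟩ := rot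
    rw [hc, hc, ← smul_add, add_comm]
    exact S.smul_mem (exchange_mem h2 l n (hw k)) c
  have := S.smul_mem (S.add_mem (S.sub_mem XY YZ) XZ) (2⁻¹ : F)
  convert this using 1
  rw [eq_inv_smul_iff₀ two_ne_zero, two_smul]
  abel

theorem symMono_mem_of_two_le (h2 : ∀ k l, symMono g [(k, true), (l, false)] ∈ S)
    {w : List (ι × Bool)} (hp : 2 ≤ pos w) (hn : 1 ≤ neg w)
    (ih : ∀ v : List (ι × Bool), pos v + 1 = pos w → neg v + 1 = neg w → symMono g v ∈ S) :
    symMono g w ∈ S := by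
  obtain ⟨⟨k, _⟩, w₁, rfl, p₁⟩ := exists_perm_cons_of_countP _ (show 0 < pos w by omega)
  have e₁ := pos_perm p₁
  have f₁ := neg_perm p₁
  simp only [pos_cons_true, neg_cons_true] at e₁ f₁
  obtain ⟨⟨n, _⟩, w₂, rfl, p₂⟩ := exists_perm_cons_of_countP _ (show 0 < pos w₁ by omega)
  have e₂ := pos_perm p₂
  have f₂ := neg_perm p₂
  simp only [pos_cons_true, neg_cons_true] at e₂ f₂
  obtain ⟨⟨l, b⟩, w₃, hb, p₃⟩ := exists_perm_cons_of_countP _ (show 0 < neg w₂ by omega)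
  obtain rfl : b = false := by simpa using hb
  have e₃ := pos_perm p₃
  have f₃ := neg_perm p₃
  simp only [pos_cons_false, neg_cons_false] at e₃ f₃
  have p : w.Perm ((k, true) :: (l, false) :: (n, true) :: w₃) :=
    p₁.trans (((p₂.trans (p₃.cons _)).trans (.swap _ _ _)).cons _)
  refine symMono_mem_of_perm hg p (symMono_mem_of_two_one hg h2 k l n fun j => ih _ ?_ ?_) <;>
    simp <;> omega

/-- A word in which both letter types occur is decomposable once all words with one letter of
each type fewer are known to give elements of `S`. -/
theorem symMono_mem_of_mixed (h2 : ∀ k l, symMono g [(k, true), (l, false)] ∈ S)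
    {w : List (ι × Bool)} (hp : 1 ≤ pos w) (hn : 1 ≤ neg w) (hw : 3 ∣ pos w + 2 * neg w)
    (ih : ∀ v : List (ι × Bool), pos v + 1 = pos w → neg v + 1 = neg w → symMono g v ∈ S) :
    symMono g w ∈ S := by
  by_cases hp2 : 2 ≤ pos w
  · exact symMono_mem_of_two_le hg h2 hp2 hn ih
  by_cases hn2 : 2 ≤ neg w
  · rw [← symMono_flip]
    refine symMono_mem_of_two_le hg h2 (by simpa) (by simpa) fun v hv hv' => ?_
    rw [← symMono_flip]
    exact ih _ (by simpa using hv') (by simpa using hv)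
  obtain ⟨⟨k, _⟩, w₁, rfl, p₁⟩ := exists_perm_cons_of_countP _ (show 0 < pos w by omega)
  have e₁ := pos_perm p₁
  have f₁ := neg_perm p₁
  simp only [pos_cons_true, neg_cons_true] at e₁ f₁
  obtain ⟨⟨l, b⟩, w₂, hb, p₂⟩ := exists_perm_cons_of_countP _ (show 0 < neg w₁ by omega)
  obtain rfl : b = false := by simpa using hb
  have e₂ := pos_perm p₂
  have f₂ := neg_perm p₂
  simp only [pos_cons_false, neg_cons_false] at e₂ f₂
  obtain rfl : w₂ = [] := List.length_eq_zero_iff.mp (by rw [length_eq]; omega)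
  exact symMono_mem_of_perm hg (p₁.trans (p₂.cons _)) (h2 k l)

end Membership

/-! ### Words from power sums of degrees two and six -/

section PowerSums

variable [CharZero F] {ω : F} (hω : 1 + ω + ω ^ 2 = 0) {S : Subalgebra F R} {g : ι → Bool → R}
  (hS2 : ∀ ks : List ι, ks.length = 2 → powerSum ω g ks ∈ S)
  (hS6 : ∀ ks : List ι, ks.length = 6 → powerSum ω g ks ∈ S)
  (hg : ∀ k l, ∃ c : F, ∀ a b, g k a * g l b = c • (g l b * g k a))

include hω hS2 in
theorem symMono_pair_mem (k l : ι) : symMono g [(k, true), (l, false)] ∈ S := by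
  have h := S.smul_mem (hS2 [k, l] rfl) (2 : F)
  rw [two_smul_powerSum hω] at h
  have e := symMono_flip g [(k, true), (l, false)]
  simp only [flipWord, List.map_cons, List.map_nil, Bool.not_true, Bool.not_false] at e
  simp only [words, List.map_cons, List.map_nil, List.cons_append, List.nil_append,
    List.sum_cons, List.sum_nil] at h
  rw [chi_of_not_dvd hω (w := [(k, true), (l, true)]) (by simp),
    chi_of_not_dvd hω (w := [(k, false), (l, false)]) (by simp),
    chi_of_dvd hω (w := [(k, true), (l, false)]) (by simp),
    chi_of_dvd hω (w := [(k, false), (l, true)]) (by simp), e] at h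
  convert S.smul_mem h (6⁻¹ : F) using 1
  rw [eq_inv_smul_iff₀ (by norm_num)]
  module

theorem exists_of_neg_eq_zero {w : List (ι × Bool)} (h : neg w = 0) :
    ∃ ks : List ι, w = ks.map fun k => (k, true) := by
  refine ⟨w.map Prod.fst, ?_⟩
  simp only [neg, List.countP_eq_zero, Bool.not_eq_true', Bool.not_eq_false] at h
  rw [List.map_map]
  exact (List.map_id w).symm.trans
    (List.map_congr_left fun a ha => Prod.ext rfl (by simpa using h a ha))

include hω hS6 in
/-- Modulo the words of type `s³t³`, six times `T(s⋯s)` is twice the power sum of degree six. -/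
theorem symMono_six_mem
    (hmix : ∀ w : List (ι × Bool), pos w = 3 → neg w = 3 → symMono g w ∈ S)
    (ks : List ι) (hks : ks.length = 6) : symMono g (ks.map fun k => (k, true)) ∈ S := by
  obtain ⟨k, ks, rfl⟩ := List.exists_cons_of_length_eq_add_one hks
  have h := S.smul_mem (hS6 _ hks) (2 : F)
  rw [two_smul_powerSum hω] at h
  have main : ∀ b, ((words ks).map fun w => chi ω ((k, b) :: w) • symMono g ((k, b) :: w)).sum -
      chi ω ((k, b) :: ks.map fun k => (k, b)) • symMono g ((k, b) :: ks.map fun k => (k, b))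
      ∈ Subalgebra.toSubmodule S := by
    intro b
    refine sum_words_sub_mem b ks (fun w => chi ω ((k, b) :: w) • symMono g ((k, b) :: w)) ?_
    rintro w hw ⟨a, ha, hab⟩
    by_cases hd : 3 ∣ pos ((k, b) :: w) + 2 * neg ((k, b) :: w)
    · have hlen := length_eq w
      rw [length_of_mem_words hw, Nat.succ.inj hks] at hlen
      have : 0 < pos ((k, b) :: w) ∧ 0 < neg ((k, b) :: w) := by
        cases b
        · exact ⟨List.countP_pos_iff.mpr ⟨a, .tail _ ha, hab⟩, by simp⟩
        · exact ⟨by simp, List.countP_pos_iff.mpr ⟨a, .tail _ ha, by simp [hab]⟩⟩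
      refine S.smul_mem (hmix _ ?_ ?_) _ <;> cases b <;> simp at this hd ⊢ <;> omega
    · rw [chi_of_not_dvd hω hd, zero_smul]
      exact zero_mem _
  have e := symMono_flip g ((k, true) :: ks.map fun k => (k, true))
  simp only [flipWord, List.map_cons, List.map_map, Function.comp_def, Bool.not_true] at e
  have cnt : ∀ b, 3 ∣ pos ((k, b) :: ks.map fun k => (k, b)) +
      2 * neg ((k, b) :: ks.map fun k => (k, b)) := by
    intro b
    have h0 : ks.length = 5 := Nat.succ.inj hks
    cases b <;>
      simp [pos, neg, List.countP_map, Function.comp_def, List.countP_true, h0]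
  have h' := S.sub_mem h (S.add_mem (main true) (main false))
  rw [chi_of_dvd hω (cnt true), chi_of_dvd hω (cnt false), e] at h'
  convert S.smul_mem h' (6⁻¹ : F) using 1
  rw [eq_inv_smul_iff₀ (by norm_num)]
  simp only [words, List.map_append, List.sum_append, List.map_map, Function.comp_def,
    List.map_cons]
  module

include hg hω hS2 hS6 in
/-- Every symmetrized word of even length and weight divisible by `3` lies in a subalgebra that
contains the polarized power sums of degrees two and six. -/
theorem symMono_mem {w : List (ι × Bool)} (h3 : 3 ∣ pos w + 2 * neg w) (h2 : 2 ∣ w.length) :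
    symMono g w ∈ S := by
  have hpair := symMono_pair_mem hω hS2
  induction hN : w.length using Nat.strong_induction_on generalizing w with
  | _ N IH =>
  have mixed : ∀ v : List (ι × Bool), v.length = N → 1 ≤ pos v → 1 ≤ neg v →
      3 ∣ pos v + 2 * neg v → symMono g v ∈ S := by
    intro v hv hp hn hd
    refine symMono_mem_of_mixed hg hpair hp hn hd fun u hu hu' => ?_
    have := length_eq u
    have := length_eq v
    exact IH u.length (by omega) (by omega) (by omega) rfl
  have pure : ∀ v : List (ι × Bool), v.length = N → neg v = 0 → 3 ∣ pos v + 2 * neg v →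
      symMono g v ∈ S := by
    intro v hv hn hd
    have hl := length_eq v
    obtain hN0 | hN6 | hN7 : N = 0 ∨ N = 6 ∨ 6 < N := by omega
    · obtain rfl : v = [] := List.length_eq_zero_iff.mp (by omega)
      exact S.add_mem S.one_mem S.one_mem
    · obtain ⟨ks, rfl⟩ := exists_of_neg_eq_zero hn
      refine symMono_six_mem hω hS6 (fun u hu hu' => mixed u ?_ ?_ ?_ ?_) ks ?_
      · rw [length_eq]; omega
      all_goals first | omega | simpa [hN6] using hv
    -- `T(u) T(v) = T(uv) + T(u v')` for `v'` the image of `v` under `s ↔ t`, and `u v'` is mixed.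
    · have hsplit := List.take_append_drop 6 v
      set a := v.take 6 with ha
      set b := v.drop 6 with hb
      have hp := pos_append a b
      have hn' := neg_append a b
      rw [hsplit] at hp hn'
      have hla := length_eq a
      have hlb := length_eq b
      have hla' : a.length = 6 := by rw [ha, List.length_take]; omega
      have hlb' : b.length = N - 6 := by rw [hb, List.length_drop]; omega
      have hA := IH 6 hN7 (w := a) (by omega) (by omega) hla'
      have hB := IH (N - 6) (by omega) (w := b) (by omega) (by omega) hlb'
      have hM := mixed (a ++ flipWord b) (by simp [flipWord]; omega)
        (by rw [pos_append]; omega) (by rw [neg_append, neg_flip]; omega)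
        (by rw [pos_append, neg_append, neg_flip, pos_flip]; omega)
      convert S.sub_mem (S.mul_mem hA hB) hM using 1
      rw [← hsplit]
      simp only [symMono, mono_append, mono_flip, Bool.not_false, Bool.not_true]
      noncomm_ring
  have hl := length_eq w
  by_cases hn : neg w = 0
  · exact pure w hN hn h3
  by_cases hp : pos w = 0
  · rw [← symMono_flip]
    exact pure _ (by simpa [flipWord] using hN) (by simpa) (by simp; omega)
  · exact mixed w hN (by omega) (by omega) h3

end PowerSums
end Words

/-! ### Eigenletters and the Reynolds operator -/

section Eigenletters

variable {F R ι : Type*} [Field F] [CharZero F] [Ring R] [Algebra F R]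

/-- The eigenvectors of the cyclic permutation of `ψ k 0, ψ k 1, ψ k 2`: `eigen ω ψ k true` has
eigenvalue `ω` and `eigen ω ψ k false` has eigenvalue `ω²`. -/
def eigen (ω : F) (ψ : ι → Fin 3 → R) (k : ι) (b : Bool) : R :=
  (3⁻¹ : F) • (ψ k 0 + (if b then ω ^ 2 else ω) • ψ k 1 + (if b then ω else ω ^ 2) • ψ k 2)

variable {ω : F} (hω : 1 + ω + ω ^ 2 = 0) {ψ : ι → Fin 3 → R}

include hω

theorem eigen_zero (hψ : ∀ k, ψ k 0 + ψ k 1 + ψ k 2 = 0) (k : ι) :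
    ψ k 0 = eigen ω ψ k true + eigen ω ψ k false := by
  have h := eq_neg_of_add_eq_zero_right (hψ k)
  simp only [eigen, h, if_true, Bool.false_eq_true, if_false]
  match_scalars
  · linear_combination (1/3 : F) * hω
  · ring

theorem eigen_one (hψ : ∀ k, ψ k 0 + ψ k 1 + ψ k 2 = 0) (k : ι) :
    ψ k 1 = ω • eigen ω ψ k true + ω ^ 2 • eigen ω ψ k false := by
  have h3 := cube_eq_one hω
  have h := eq_neg_of_add_eq_zero_right (hψ k)
  simp only [eigen, h, if_true, Bool.false_eq_true, if_false]
  match_scalars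
  · linear_combination (1/3 : F) * (hω + (ω - 2) * h3)
  · linear_combination (1/3 : F) * ω * h3

theorem eigen_two (hψ : ∀ k, ψ k 0 + ψ k 1 + ψ k 2 = 0) (k : ι) :
    ψ k 2 = ω ^ 2 • eigen ω ψ k true + ω • eigen ω ψ k false := by
  have h3 := cube_eq_one hω
  have h := eq_neg_of_add_eq_zero_right (hψ k)
  simp only [eigen, h, if_true, Bool.false_eq_true, if_false]
  match_scalars
  · linear_combination (1/3 : F) * (-hω + 2 * h3)
  · linear_combination (1/3 : F) * (- hω + 2 * h3 - ω * h3)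

/-- The polarized power sum in the eigenletters is the power sum of the original letters. -/
theorem powerSum_eigen (hψ : ∀ k, ψ k 0 + ψ k 1 + ψ k 2 = 0) (ks : List ι) :
    powerSum ω (eigen ω ψ) ks = ∑ i, (ks.map fun k => ψ k i).prod := by
  rw [Fin.sum_univ_three]
  simp only [powerSum, eigen_zero hω hψ, eigen_one hω hψ, eigen_two hω hψ]

omit hω [CharZero F] in
theorem eigen_comm (hc : ∀ k l, ∃ c : F, ∀ i j, ψ k i * ψ l j = c • (ψ l j * ψ k i)) (k l : ι) :
    ∃ c : F, ∀ a b, eigen ω ψ k a * eigen ω ψ l b = c • (eigen ω ψ l b * eigen ω ψ k a) := by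
  obtain ⟨c, hc⟩ := hc k l
  refine ⟨c, fun a b => ?_⟩
  simp only [eigen, mul_add, add_mul, smul_mul_assoc, mul_smul_comm, hc, smul_add]
  module

/-- Elements fixed by the cyclic rotation, by a transposition and by the sign change lie in any
subalgebra containing the power sums of degrees two and six. -/
theorem mem_of_fixed (hψ : ∀ k, ψ k 0 + ψ k 1 + ψ k 2 = 0)
    (hc : ∀ k l, ∃ c : F, ∀ i j, ψ k i * ψ l j = c • (ψ l j * ψ k i))
    (htop : Algebra.adjoin F (Set.range fun p : ι × Fin 3 => ψ p.1 p.2) = ⊤)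
    {S : Subalgebra F R}
    (hS2 : ∀ ks : List ι, ks.length = 2 → ∑ i, (ks.map fun k => ψ k i).prod ∈ S)
    (hS6 : ∀ ks : List ι, ks.length = 6 → ∑ i, (ks.map fun k => ψ k i).prod ∈ S)
    (C B N : R →ₐ[F] R) (hC : ∀ k i, C (ψ k i) = ψ k (finRotate 3 i))
    (hB : ∀ k i, B (ψ k i) = ψ k (Equiv.swap 1 2 i)) (hN : ∀ k i, N (ψ k i) = -ψ k i)
    {x : R} (hxC : C x = x) (hxB : B x = x) (hxN : N x = x) : x ∈ S := by
  have h3 := cube_eq_one hω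
  set g := eigen ω ψ with hg
  have hgC : ∀ k b, C (g k b) = (if b then ω else ω ^ 2) • g k b := by
    intro k b
    have e : finRotate 3 2 = 0 := rfl
    cases b <;> simp [hg, eigen, hC, e] <;> match_scalars <;>
      first | ring1 | linear_combination (-1/3 : F) * h3 | linear_combination (-1/3 : F) * ω * h3
  have hgB : ∀ k b, B (g k b) = g k (!b) := by
    intro k b
    have e : Equiv.swap (1 : Fin 3) 2 0 = 0 := by decide
    cases b <;> simp [hg, eigen, hB, e] <;> module
  have hgN : ∀ k b, N (g k b) = - g k b := by
    intro k b
    simp only [hg, eigen, hN, map_smul, map_add]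
    module
  have hmC : ∀ e w, C (mono g e w) = (if e then ω ^ 2 else ω) ^ (pos w + 2 * neg w) • mono g e w := by
    intro e w
    induction w with
    | nil => simp [mono]
    | cons a w ih =>
      obtain ⟨k, b⟩ := a
      rw [mono_cons, map_mul, hgC, ih, smul_mul_smul_comm]
      congr 1
      cases e <;> cases b <;> simp only [Bool.xor_false, Bool.xor_true, Bool.not_true,
        Bool.not_false, if_true, if_false, Bool.false_eq_true, pos_cons_true, pos_cons_false,
        neg_cons_true, neg_cons_false, mul_add, add_right_comm _ 1, ← add_assoc, pow_succ, mul_one]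
      · ring
      · ring
      · linear_combination (-ω * (ω ^ 2) ^ (pos w + 2 * neg w)) * h3
      · ring
  have hmB : ∀ w, B (mono g false w) = mono g true w := by
    intro w
    induction w with
    | nil => simp [mono]
    | cons a w ih =>
      rw [mono_cons, map_mul, hgB, ih, mono_cons]
      simp
  have hmN : ∀ e w, N (mono g e w) = (-1 : F) ^ w.length • mono g e w := by
    intro e w
    induction w with
    | nil => simp [mono]
    | cons a w ih =>
      rw [mono_cons, map_mul, hgN, ih, List.length_cons, pow_succ]
      simp
  have hspan : x ∈ Submodule.span F (Set.range (mono g false)) := by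
    set M := MonoidHom.mrange (FreeMonoid.lift fun a : ι × Bool => g a.1 a.2) with hM
    have hrange : Set.range (mono g false) = (M : Set R) := by
      rw [hM, MonoidHom.coe_mrange]
      refine congrArg Set.range (funext fun w => ?_)
      simp only [mono, Bool.xor_false]
      exact (FreeMonoid.lift_apply _ (FreeMonoid.ofList w)).symm
    have hA : Subalgebra.toSubmodule (Algebra.adjoin F (Set.range fun a : ι × Bool => g a.1 a.2)) =
        Submodule.span F (M : Set R) := by
      rw [Algebra.adjoin_eq_span, hM, FreeMonoid.mrange_lift]
    have hA' : Algebra.adjoin F (Set.range fun a : ι × Bool => g a.1 a.2) = ⊤ := by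
      rw [eq_top_iff, ← htop, Algebra.adjoin_le_iff]
      rintro _ ⟨⟨k, i⟩, rfl⟩
      have hb : ∀ b, g k b ∈ Algebra.adjoin F (Set.range fun a : ι × Bool => g a.1 a.2) :=
        fun b => Algebra.subset_adjoin ⟨(k, b), rfl⟩
      fin_cases i
      · simpa [hg, eigen_zero hω hψ] using add_mem (hb true) (hb false)
      · simpa [hg, eigen_one hω hψ] using
          add_mem (Subalgebra.smul_mem _ (hb true) ω) (Subalgebra.smul_mem _ (hb false) (ω ^ 2))
      · simpa [hg, eigen_two hω hψ] using
          add_mem (Subalgebra.smul_mem _ (hb true) (ω ^ 2)) (Subalgebra.smul_mem _ (hb false) ω)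
    rw [hrange, ← hA, hA']
    trivial
  -- The unnormalized Reynolds operator, which sends a word to a multiple of its symmetrization.
  let P : R →ₗ[F] R := (LinearMap.id + B.toLinearMap) ∘ₗ
    (LinearMap.id + C.toLinearMap + C.toLinearMap ∘ₗ C.toLinearMap) ∘ₗ
    (LinearMap.id + N.toLinearMap)
  have hP : ∀ w, P (mono g false w) ∈ S := by
    intro w
    have e : P (mono g false w) = ((1 + (-1) ^ w.length) * chi ω w) • symMono g w := by
      simp only [P, LinearMap.comp_apply, LinearMap.add_apply, LinearMap.id_apply,
        AlgHom.toLinearMap_apply, map_add, map_smul, hmC, hmN, hmB, chi, symMono]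
      simp
      module
    rw [e]
    by_cases hd : 3 ∣ pos w + 2 * neg w
    · rcases Nat.even_or_odd w.length with he | ho
      · exact S.smul_mem (symMono_mem hω
          (fun ks h => powerSum_eigen hω hψ ks ▸ hS2 ks h)
          (fun ks h => powerSum_eigen hω hψ ks ▸ hS6 ks h) (eigen_comm hc) hd he.two_dvd) _
      · simp [ho.neg_one_pow]
    · simp [chi_of_not_dvd hω hd]
  have hPx : P x = (12 : F) • x := by
    simp only [P, LinearMap.comp_apply, LinearMap.add_apply, LinearMap.id_apply,
      AlgHom.toLinearMap_apply, map_add, hxC, hxB, hxN]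
    module
  have hmem : P x ∈ S := by
    have : Submodule.span F (Set.range (mono g false)) ≤ (Subalgebra.toSubmodule S).comap P :=
      Submodule.span_le.mpr (by rintro _ ⟨w, rfl⟩; exact hP w)
    exact this hspan
  rw [hPx] at hmem
  convert S.smul_mem hmem (12⁻¹ : F) using 1
  rw [eq_inv_smul_iff₀ (by norm_num)]

end Eigenletters

/-! ### Descent to the rational numbers -/

section Descent

variable {K ι : Type*} [Ring K] [Algebra ℚ K]

/-- Membership in a subalgebra can be tested after base change to an extension field, by means
of a linear retraction of the extension onto `ℚ`. -/
theorem mem_of_tmul_mem_baseChange (F : Type*) [Field F] [Algebra ℚ F] (S : Subalgebra ℚ K) {x : K}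
    (h : (1 : F) ⊗ₜ[ℚ] x ∈ S.baseChange F) : x ∈ S := by
  obtain ⟨r, hr⟩ := LinearMap.exists_leftInverse_of_injective (Algebra.linearMap ℚ F)
    (LinearMap.ker_eq_bot.mpr (algebraMap ℚ F).injective)
  have hr1 : r 1 = 1 := by simpa using LinearMap.congr_fun hr 1
  let D : F ⊗[ℚ] K →ₗ[ℚ] K := (TensorProduct.lid ℚ K).toLinearMap ∘ₗ r.rTensor K
  have hD : ∀ y : F ⊗[ℚ] S, D (Algebra.TensorProduct.map (AlgHom.id F F) S.val y) ∈ S := by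
    intro y
    induction y with
    | zero => simp
    | tmul c s => simpa [D] using S.smul_mem s.2 (r c)
    | add a b ha hb => simpa only [map_add] using S.add_mem ha hb
  obtain ⟨y, hy⟩ := h
  have := hD y
  rw [show Algebra.TensorProduct.map (AlgHom.id F F) S.val y = (1 : F) ⊗ₜ[ℚ] x from hy] at this
  simpa [D, hr1] using this

/-- Descent of `mem_of_fixed` to `ℚ`. -/
theorem mem_of_fixed_rat {φ : ι → Fin 3 → K} (hφ : ∀ k, φ k 0 + φ k 1 + φ k 2 = 0)
    (hc : ∀ k l, ∃ c : ℚ, ∀ i j, φ k i * φ l j = c • (φ l j * φ k i))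
    (htop : Algebra.adjoin ℚ (Set.range fun p : ι × Fin 3 => φ p.1 p.2) = ⊤)
    {S : Subalgebra ℚ K}
    (hS2 : ∀ ks : List ι, ks.length = 2 → ∑ i, (ks.map fun k => φ k i).prod ∈ S)
    (hS6 : ∀ ks : List ι, ks.length = 6 → ∑ i, (ks.map fun k => φ k i).prod ∈ S)
    (C B N : K →ₐ[ℚ] K) (hC : ∀ k i, C (φ k i) = φ k (finRotate 3 i))
    (hB : ∀ k i, B (φ k i) = φ k (Equiv.swap 1 2 i)) (hN : ∀ k i, N (φ k i) = -φ k i)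
    {x : K} (hxC : C x = x) (hxB : B x = x) (hxN : N x = x) : x ∈ S := by
  obtain ⟨ω, hω⟩ : ∃ ω : ℂ, 1 + ω + ω ^ 2 = 0 := by
    have h := (Complex.isPrimitiveRoot_exp 3 (by norm_num)).geom_sum_eq_zero (by norm_num)
    exact ⟨_, by simpa [Finset.sum_range_succ] using h⟩
  let j : K →ₐ[ℚ] ℂ ⊗[ℚ] K := Algebra.TensorProduct.includeRight
  have hj : ∀ y, j y = (1 : ℂ) ⊗ₜ[ℚ] y := fun y => rfl
  have hpow : ∀ ks : List ι, ∑ i, (ks.map fun k => j (φ k i)).prod =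
      (1 : ℂ) ⊗ₜ[ℚ] ∑ i, (ks.map fun k => φ k i).prod := by
    intro ks
    rw [← hj, map_sum]
    simp [map_list_prod, List.map_map, Function.comp_def]
  let E (f : K →ₐ[ℚ] K) : ℂ ⊗[ℚ] K →ₐ[ℂ] ℂ ⊗[ℚ] K :=
    Algebra.TensorProduct.map (AlgHom.id ℂ ℂ) f
  have hE : ∀ f y, E f (j y) = j (f y) := fun f y => by simp [E, hj]
  refine mem_of_tmul_mem_baseChange ℂ S ?_
  rw [← hj]
  refine mem_of_fixed hω (ψ := fun k i => j (φ k i)) ?_ ?_ ?_ ?_ ?_ (E C) (E B) (E N) ?_ ?_ ?_ ?_ ?_ ?_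
  · intro k
    rw [← map_add, ← map_add, hφ, map_zero]
  · intro k l
    obtain ⟨c, hc⟩ := hc k l
    exact ⟨c, fun i i' => by
      rw [← map_mul, hc, map_smul, map_mul, ← algebraMap_smul ℂ c, eq_ratCast]⟩
  · have hle : ∀ y : K, j y ∈ Algebra.adjoin ℂ (Set.range fun p : ι × Fin 3 => j (φ p.1 p.2)) := by
      intro y
      have hy : y ∈ Algebra.adjoin ℚ (Set.range fun p : ι × Fin 3 => φ p.1 p.2) := htop ▸ trivial
      induction hy using Algebra.adjoin_induction with
      | mem y hy => obtain ⟨p, rfl⟩ := hy; exact Algebra.subset_adjoin ⟨p, rfl⟩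
      | algebraMap r =>
        rw [AlgHom.commutes, IsScalarTower.algebraMap_apply ℚ ℂ]
        exact Subalgebra.algebraMap_mem _ _
      | add _ _ _ _ ha hb => rw [map_add]; exact add_mem ha hb
      | mul _ _ _ _ ha hb => rw [map_mul]; exact mul_mem ha hb
    refine eq_top_iff.mpr fun y _ => ?_
    induction y with
    | zero => exact zero_mem _
    | tmul c y =>
      rw [← mul_one c, ← smul_eq_mul, ← TensorProduct.smul_tmul']
      exact Subalgebra.smul_mem _ (hle y) c
    | add a b ha hb => exact add_mem (ha trivial) (hb trivial)
  · intro ks h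
    rw [hpow]
    exact Subalgebra.tmul_mem_baseChange (hS2 ks h) 1
  · intro ks h
    rw [hpow]
    exact Subalgebra.tmul_mem_baseChange (hS6 ks h) 1
  · intro k i; rw [hE, hC]
  · intro k i; rw [hE, hB]
  · intro k i; rw [hE, hN, map_neg]
  · rw [hE, hxC]
  · rw [hE, hxB]
  · rw [hE, hxN]

end Descent

/-! ### Power sums along the words `x^d α_I` -/

section Exponents

variable {K : Type*} [Ring K] [Algebra ℚ K] {m : ℕ}

/-- The word `x^d α_I`, with exponents encoded by repetition. -/
def zWord (d : ℕ) (I : Finset (Fin m)) : List (Option (Fin m)) :=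
  List.replicate d none ++ (I.sort (· ≤ ·)).map some

theorem length_zWord (d : ℕ) (I : Finset (Fin m)) :
    (zWord d I).length = d + I.card := by simp [zWord]

omit [Algebra ℚ K] in
theorem prod_zWord (φ : Option (Fin m) → K) (d : ℕ) (I : Finset (Fin m)) :
    ((zWord d I).map φ).prod = φ none ^ d * ((I.sort (· ≤ ·)).map fun j => φ (some j)).prod := by
  simp [zWord, Function.comp_def]

/-- Up to a scalar, every polarized power sum is one along a word `x^d α_I`: letters commute up to
a scalar, and a word with a repeated odd letter vanishes. -/
theorem exists_powerSum_eq_zWord (φ : Option (Fin m) → Fin 3 → K)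
    (hc : ∀ k l, ∃ c : ℚ, ∀ i j, φ k i * φ l j = c • (φ l j * φ k i))
    (hsq : ∀ j i, φ (some j) i * φ (some j) i = 0) (ks : List (Option (Fin m))) :
    ∃ (c : ℚ) (I : Finset (Fin m)), I.card ≤ ks.length ∧
      ∑ i, (ks.map fun k => φ k i).prod =
        c • ∑ i, ((zWord (ks.length - I.card) I).map fun k => φ k i).prod := by
  have hperm : ∀ {w w' : List (Option (Fin m))}, w.Perm w' →
      ∃ c : ℚ, ∀ i, (w.map fun k => φ k i).prod = c • (w'.map fun k => φ k i).prod :=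
    fun p => exists_smul_prod_of_perm (k := ℚ) (fun (i : Fin 3) k => φ k i)
      (fun a b => (hc a b).imp fun c hc i => hc i i) p
  obtain ⟨d, L, hL⟩ : ∃ d, ∃ L : List (Fin m), ks.Perm (List.replicate d none ++ L.map some) := by
    clear hperm
    induction ks with
    | nil => exact ⟨0, [], by simp⟩
    | cons k ks ih =>
      obtain ⟨d, L, h⟩ := ih
      cases k with
      | none => exact ⟨d + 1, L, by simpa [List.replicate_succ] using h⟩
      | some j => exact ⟨d, j :: L, (h.cons _).trans List.perm_middle.symm⟩
  by_cases hnd : L.Nodup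
  · have hp : ks.Perm (zWord d L.toFinset) :=
      hL.trans (((((Finset.sort_perm_toList _ _).trans
        (List.toFinset_toList hnd)).map some).symm).append_left _)
    have hlen := hp.length_eq
    rw [length_zWord] at hlen
    obtain ⟨c, hc⟩ := hperm hp
    refine ⟨c, L.toFinset, by omega, ?_⟩
    rw [show ks.length - L.toFinset.card = d by omega, Finset.smul_sum]
    exact Finset.sum_congr rfl fun i _ => hc i
  · refine ⟨0, ∅, by simp, ?_⟩
    rw [zero_smul]
    obtain ⟨j, hj⟩ : ∃ j, List.Sublist [j, j] L := by
      simpa [List.nodup_iff_sublist] using hnd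
    obtain ⟨L', hL'⟩ := hj.exists_perm_append
    have hp : ks.Perm (some j :: some j :: (L'.map some ++ List.replicate d none)) :=
      hL.trans (List.perm_append_comm.trans ((hL'.map some).append_right _))
    obtain ⟨c, hc⟩ := hperm hp
    refine Finset.sum_eq_zero fun i _ => ?_
    rw [hc, List.map_cons, List.map_cons, List.prod_cons, List.prod_cons, ← mul_assoc, hsq,
      zero_mul, smul_zero]

theorem map_powerSum_perm {φ : Option (Fin m) → Fin 3 → K} {f : K →ₐ[ℚ] K}
    {σ : Equiv.Perm (Fin 3)} (hf : ∀ k i, f (φ k i) = φ k (σ i)) (w : List (Option (Fin m))) :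
    f (∑ i, (w.map fun k => φ k i).prod) = ∑ i, (w.map fun k => φ k i).prod := by
  rw [map_sum]
  refine Fintype.sum_equiv σ _ _ fun i => ?_
  simp [map_list_prod, List.map_map, Function.comp_def, hf]

theorem map_powerSum_neg {φ : Option (Fin m) → Fin 3 → K} {f : K →ₐ[ℚ] K}
    (hf : ∀ k i, f (φ k i) = -φ k i) {w : List (Option (Fin m))} (hw : Even w.length) :
    f (∑ i, (w.map fun k => φ k i).prod) = ∑ i, (w.map fun k => φ k i).prod := by
  rw [map_sum]
  refine Finset.sum_congr rfl fun i _ => ?_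
  have h : ∀ w : List (Option (Fin m)), f ((w.map fun k => φ k i).prod) =
      (-1 : ℚ) ^ w.length • (w.map fun k => φ k i).prod := by
    intro w
    induction w with
    | nil => simp
    | cons k w ih =>
      rw [List.map_cons, List.prod_cons, map_mul, ih, hf, List.length_cons, pow_succ]
      simp
  rw [h, hw.neg_one_pow, one_smul]

end Exponents

/-! ### The algebra of the theorem -/

section Application

/-- The degree-one generators of `K(m)`: `letter m none` is the triple `x, y, w` and
`letter m (some j)` is the triple `α_j, β_j, γ_j`. -/
def letter (m : ℕ) : Option (Fin m) → Fin 3 → Kk m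
  | none, i => mkA (X i) ⊗ₜ[ℚ] 1
  | some j, i => 1 ⊗ₜ[ℚ] eGen m j i

theorem vGen_sum : vGen 0 + vGen 1 + vGen 2 = 0 := by
  rw [vGen, vGen, vGen, ← Submodule.Quotient.mk_add, ← Submodule.Quotient.mk_add,
    Submodule.Quotient.mk_eq_zero]
  refine Submodule.subset_span ?_
  rw [Set.mem_singleton_iff]
  funext i
  fin_cases i <;> simp

theorem letter_sum (m : ℕ) (k : Option (Fin m)) :
    letter m k 0 + letter m k 1 + letter m k 2 = 0 := by
  cases k with
  | none =>
    simp only [letter, ← TensorProduct.add_tmul, ← map_add]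
    have : mkA (X 0 + X 1 + X 2) = 0 :=
      Ideal.Quotient.eq_zero_iff_mem.mpr (Ideal.subset_span (by simp))
    rw [this, TensorProduct.zero_tmul]
  | some j =>
    simp only [letter, ← TensorProduct.tmul_add, eGen, ← map_add, ← Pi.single_add, vGen_sum,
      Pi.single_zero, map_zero, TensorProduct.tmul_zero]

theorem letter_comm (m : ℕ) (k l : Option (Fin m)) :
    ∃ c : ℚ, ∀ i i', letter m k i * letter m l i' = c • (letter m l i' * letter m k i) := by
  rcases k with _ | j <;> rcases l with _ | j'
  · exact ⟨1, fun i i' => by simp [letter, mul_comm]⟩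
  · exact ⟨1, fun i i' => by simp [letter]⟩
  · exact ⟨1, fun i i' => by simp [letter]⟩
  · refine ⟨-1, fun i i' => ?_⟩
    have := eq_neg_of_add_eq_zero_left
      (ExteriorAlgebra.ι_add_mul_swap (R := ℚ) (Pi.single j (vGen i) : Fin m → Vq)
        (Pi.single j' (vGen i') : Fin m → Vq))
    simp only [letter, Algebra.TensorProduct.tmul_mul_tmul, mul_one, eGen, this,
      TensorProduct.tmul_neg]
    exact (neg_one_smul ℚ (M := Kk m) _).symm

theorem adjoin_letter (m : ℕ) :
    Algebra.adjoin ℚ (Set.range fun p : Option (Fin m) × Fin 3 => letter m p.1 p.2) = ⊤ := by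
  set S := Algebra.adjoin ℚ (Set.range fun p : Option (Fin m) × Fin 3 => letter m p.1 p.2) with hS
  have hmem : ∀ k i, letter m k i ∈ S := fun k i => Algebra.subset_adjoin ⟨(k, i), rfl⟩
  have hA : ∀ a : Aq, a ⊗ₜ[ℚ] (1 : Em m) ∈ S := by
    intro a
    obtain ⟨p, rfl⟩ := Ideal.Quotient.mk_surjective a
    change (Algebra.TensorProduct.includeLeft : Aq →ₐ[ℚ] Kk m) (mkA p) ∈ S
    induction p using MvPolynomial.induction_on with
    | C r =>
      rw [← MvPolynomial.algebraMap_eq, AlgHom.commutes, AlgHom.commutes]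
      exact S.algebraMap_mem r
    | add p q hp hq => rw [map_add, map_add]; exact S.add_mem hp hq
    | mul_X p i hp => rw [map_mul, map_mul]; exact S.mul_mem hp (hmem none i)
  have hV : ∀ v : Vq, v ∈ Submodule.span ℚ (Set.range vGen) := by
    intro v
    obtain ⟨f, rfl⟩ := Submodule.Quotient.mk_surjective _ v
    rw [← Finset.univ_sum_single f]
    rw [← Submodule.mkQ_apply, map_sum]
    refine Submodule.sum_mem _ fun i _ => ?_
    rw [show (Pi.single i (f i) : Fin 3 → ℚ) = f i • Pi.single i 1 by
      rw [← Pi.single_smul, smul_eq_mul, mul_one], map_smul]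
    exact Submodule.smul_mem _ _ (Submodule.subset_span ⟨i, rfl⟩)
  have hι : ∀ v : Fin m → Vq, (1 : Aq) ⊗ₜ[ℚ] ExteriorAlgebra.ι ℚ v ∈ S := by
    intro v
    rw [← Finset.univ_sum_single v, map_sum, TensorProduct.tmul_sum]
    refine S.sum_mem fun j _ => ?_
    have hle : Submodule.span ℚ (Set.range vGen) ≤ (Subalgebra.toSubmodule S).comap
        (TensorProduct.mk ℚ Aq (Em m) 1 ∘ₗ ExteriorAlgebra.ι ℚ ∘ₗ
          LinearMap.single ℚ (fun _ : Fin m => Vq) j) := by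
      rw [Submodule.span_le]
      rintro _ ⟨i, rfl⟩
      exact hmem (some j) i
    exact hle (hV (v j))
  have hE : ∀ e : Em m, (1 : Aq) ⊗ₜ[ℚ] e ∈ S := by
    intro e
    change (Algebra.TensorProduct.includeRight : Em m →ₐ[ℚ] Kk m) e ∈ S
    induction e using ExteriorAlgebra.induction with
    | algebraMap r => rw [AlgHom.commutes]; exact S.algebraMap_mem r
    | ι v => exact hι v
    | mul a b ha hb => rw [map_mul]; exact S.mul_mem ha hb
    | add a b ha hb => rw [map_add]; exact S.add_mem ha hb
  refine eq_top_iff.mpr fun y _ => ?_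
  induction y using TensorProduct.induction_on with
  | zero => exact zero_mem _
  | tmul a e =>
    have : a ⊗ₜ[ℚ] e = (a ⊗ₜ[ℚ] (1 : Em m)) * ((1 : Aq) ⊗ₜ[ℚ] e) := by simp
    rw [this]
    exact S.mul_mem (hA a) (hE e)
  | add a b ha hb => exact add_mem (ha trivial) (hb trivial)

theorem permV_vGen (σ : Equiv.Perm (Fin 3)) (i : Fin 3) : permV σ (vGen i) = vGen (σ i) := by
  rw [permV, vGen, Submodule.mapQ_apply, vGen]
  congr 1
  funext a
  simp only [LinearMap.funLeft_apply, Pi.single_apply, Equiv.Perm.inv_eq_iff_eq]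

theorem permK_letter (m : ℕ) (σ : Equiv.Perm (Fin 3)) (k : Option (Fin m)) (i : Fin 3) :
    permK m σ (letter m k i) = letter m k (σ i) := by
  cases k with
  | none =>
    have : permAq σ (mkA (X i)) = mkA (X (σ i)) := by
      rw [← rename_X (R := ℚ) (σ : Fin 3 → Fin 3) i]
      rfl
    simp [permK, letter, this]
  | some j =>
    have : (fun a => permV σ ((Pi.single j (vGen i) : Fin m → Vq) a)) =
        Pi.single j (vGen (σ i)) := by
      funext a
      rcases eq_or_ne a j with rfl | h
      · simp [permV_vGen]
      · simp [h]
    simp only [permK, letter, Algebra.TensorProduct.map_tmul, map_one, extHom, eGen,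
      ExteriorAlgebra.lift_ι_apply, LinearMap.comp_apply]
    exact congrArg (fun v => (1 : Aq) ⊗ₜ[ℚ] ExteriorAlgebra.ι ℚ v) this

theorem negK_letter (m : ℕ) (k : Option (Fin m)) (i : Fin 3) :
    negK m (letter m k i) = -letter m k i := by
  cases k with
  | none =>
    have : negAq (mkA (X i)) = -mkA (X i) := by
      rw [← map_neg]
      have : negP (X i) = -X i := aeval_X _ i
      rw [← this]
      rfl
    simp [negK, letter, this, TensorProduct.neg_tmul]
  | some j =>
    simp [negK, letter, extHom, eGen, TensorProduct.tmul_neg]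

theorem zz_eq (m d : ℕ) (I : Finset (Fin m)) :
    zz m d I = ∑ i, ((zWord d I).map fun k => letter m k i).prod := by
  have h : ∀ i, ((zWord d I).map fun k => letter m k i).prod =
      mkA (X i ^ d) ⊗ₜ[ℚ] prodGen m i I := by
    intro i
    have h1 : letter m none i ^ d = mkA (X i ^ d) ⊗ₜ[ℚ] (1 : Em m) := by
      rw [map_pow]
      exact (map_pow (Algebra.TensorProduct.includeLeft : Aq →ₐ[ℚ] Kk m) (mkA (X i)) d).symm
    have h2 : ((I.sort (· ≤ ·)).map fun j => letter m (some j) i).prod =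
        (1 : Aq) ⊗ₜ[ℚ] prodGen m i I := by
      have := map_list_prod (Algebra.TensorProduct.includeRight : Em m →ₐ[ℚ] Kk m)
        ((I.sort (· ≤ ·)).map fun j => eGen m j i)
      rw [List.map_map] at this
      exact this.symm
    refine (prod_zWord (fun k => letter m k i) d I).trans ?_
    rw [h1, h2, Algebra.TensorProduct.tmul_mul_tmul, mul_one, one_mul]
  rw [zz, Fin.sum_univ_three, h, h, h]

theorem exists_powerSum_eq_zz (m : ℕ) (ks : List (Option (Fin m))) :
    ∃ (c : ℚ) (I : Finset (Fin m)), I.card ≤ ks.length ∧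
      ∑ i, (ks.map fun k => letter m k i).prod = c • zz m (ks.length - I.card) I := by
  obtain ⟨c, I, hI, h⟩ := exists_powerSum_eq_zWord (letter m) (letter_comm m)
    (fun j i => by
      simp only [letter, eGen, Algebra.TensorProduct.tmul_mul_tmul, ExteriorAlgebra.ι_sq_zero,
        TensorProduct.tmul_zero]) ks
  exact ⟨c, I, hI, by rw [zz_eq]; exact h⟩

theorem permK_zz (m d : ℕ) (I : Finset (Fin m)) (σ : Equiv.Perm (Fin 3)) :
    permK m σ (zz m d I) = zz m d I := by
  rw [zz_eq]
  exact map_powerSum_perm (φ := letter m) (f := permK m σ) (permK_letter m σ) _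

theorem negK_zz (m d : ℕ) (I : Finset (Fin m)) (h : Even (d + I.card)) :
    negK m (zz m d I) = zz m d I := by
  rw [zz_eq]
  exact map_powerSum_neg (φ := letter m) (f := negK m) (negK_letter m) (by rwa [length_zWord])

end Application

end Dihedral

/-- For every integer `m ≥ 1`, the invariant subalgebra `K(m)^{D₆}` equals
the ℚ-subalgebra of `K(m)` generated by
`{z(3−|I|, I) : I ⊆ {1,…,m}, |I| ≤ 2} ∪ {z(7−|I|, I) : I ⊆ {1,…,m}, |I| ≤ 6}`. -/
theorem invD6_eq_adjoin_zGens (m : ℕ) (hm : 1 ≤ m) :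
    invD6 m = ↑(Algebra.adjoin ℚ
      ({z : Kk m | ∃ I : Finset (Fin m), I.card ≤ 2 ∧ z = zS m (3 - I.card) I} ∪
       {z : Kk m | ∃ I : Finset (Fin m), I.card ≤ 6 ∧ z = zS m (7 - I.card) I})) := by
  set S := Algebra.adjoin ℚ
      ({z : Kk m | ∃ I : Finset (Fin m), I.card ≤ 2 ∧ z = zS m (3 - I.card) I} ∪
       {z : Kk m | ∃ I : Finset (Fin m), I.card ≤ 6 ∧ z = zS m (7 - I.card) I}) with hS
  apply Set.Subset.antisymm
  · rintro x ⟨hx, hxN⟩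
    refine Dihedral.mem_of_fixed_rat (φ := Dihedral.letter m) (S := S) (x := x)
      (Dihedral.letter_sum m) (Dihedral.letter_comm m)
      (Dihedral.adjoin_letter m) (fun ks hks => ?_) (fun ks hks => ?_)
      (permK m (finRotate 3)) (permK m (Equiv.swap 1 2)) (negK m)
      (Dihedral.permK_letter m _) (Dihedral.permK_letter m _) (Dihedral.negK_letter m)
      (hx (finRotate 3)) (hx (Equiv.swap 1 2)) hxN
    · obtain ⟨c, I, hI, h⟩ := Dihedral.exists_powerSum_eq_zz m ks
      rw [hks] at hI h
      rw [h]
      refine S.smul_mem (Algebra.subset_adjoin (Or.inl ⟨I, hI, ?_⟩)) c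
      rw [zS, show 3 - I.card - 1 = 2 - I.card by omega]
    · obtain ⟨c, I, hI, h⟩ := Dihedral.exists_powerSum_eq_zz m ks
      rw [hks] at hI h
      rw [h]
      refine S.smul_mem (Algebra.subset_adjoin (Or.inr ⟨I, hI, ?_⟩)) c
      rw [zS, show 7 - I.card - 1 = 6 - I.card by omega]
  · have hfix : ∀ f : Kk m →ₐ[ℚ] Kk m, (∀ d I, Even (d + I.card) → f (zz m d I) = zz m d I) →
        ∀ x ∈ S, f x = x := by
      intro f hf
      suffices S ≤ AlgHom.equalizer f (AlgHom.id ℚ (Kk m)) from fun x hx => this hx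
      rw [hS, Algebra.adjoin_le_iff]
      rintro _ (⟨I, hI, rfl⟩ | ⟨I, hI, rfl⟩)
      · exact hf _ _ ⟨1, by omega⟩
      · exact hf _ _ ⟨3, by omega⟩
    exact fun x hx => ⟨fun σ => hfix _ (fun d I _ => Dihedral.permK_zz m d I σ) x hx,
      hfix _ (Dihedral.negK_zz m) x hx⟩

end
end

section
/- For every integer m ≥ 1, the invariant subalgebra K(m)^{S₃} of K(m) under the subgroup ⟨a²,b⟩ ≅ S₃ of D₆ equals the ℚ-subalgebra of K(m) generated by the set {z(i, I) : 1 ≤ i ≤ 6, I ⊆ {1,…,m}, |I| ≤ 3}. -/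
/-!
The algebra `K(m)` is a quotient of the third (graded) tensor power of `B = ℚ[x] ⊗ Λ(α₁, …, α_m)`,
and the three embeddings of a monomial `x^d α_{j₁} ⋯ α_{j_k}` of `B` are the elements
`mono x e i d [j₁, …, j_k]`, `i = 0, 1, 2`. Their sum over `i` is the polarized power sum
`powerSum x e d l`, or `p(d, l)` for short; the generators `z(d+1, I)` are those for which `l` is the increasing
enumeration of `I`.

* `K(m)` is spanned by the products `mono 0 a l₀ * mono 1 b l₁ * mono 2 c l₂` (`span_triples`).
  In characteristic zero the invariants are therefore spanned by the symmetrizations of these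
  products, and inclusion–exclusion (`symmetrize_eq`) writes such a symmetrization as a polynomial
  in power sums.
* Every power sum lies in the subalgebra generated by the `z(d+1, I)` with `d ≤ 5`, `|I| ≤ 3`
  (`powerSum_mem`). Since `e₁ = e₂ = 0` in `A`, the three elements `x³, y³, w³` coincide, hence
  `3 p(d + 3, l) = p(3, []) p(d, l)`. For the odd variables, the polarized Cayley–Hamilton
  identity `6 t³ = 3 p₂ t + 2 p₃`, valid for three elements `t` with sum zero, expresses a power sum
  over a list of length at least four through power sums over shorter lists (`cubic_powerSum`).
  Finally, a list with a repeated entry gives zero, and any other list is a reordering of a set,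
  which changes the power sum by a sign.

The argument uses only a few properties of the generators, collected in `TripleGens`. It is carried
out for an arbitrary ℚ-algebra with such generators and then specialized to the tensor product.
-/

set_option synthInstance.maxHeartbeats 1000000
set_option maxHeartbeats 1000000

open MvPolynomial
open scoped TensorProduct

noncomputable section

/-! ### Identities in noncommutative rings -/

/-- Polarized Cayley–Hamilton identity `6 t³ = 3 p₂ t + 2 p₃` for triples with sum zero. -/
lemma cubic_ring {R : Type*} [Ring R] (a b c : Fin 3 → R)
    (ha : a 0 + a 1 + a 2 = 0) (hb : b 0 + b 1 + b 2 = 0) (hc : c 0 + c 1 + c 2 = 0)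
    (k : Fin 3) :
    6 * (a k * b k * c k) = (a 0 * b 0 + a 1 * b 1 + a 2 * b 2) * c k
      + a k * (b 0 * c 0 + b 1 * c 1 + b 2 * c 2)
      + (a 0 * b k * c 0 + a 1 * b k * c 1 + a 2 * b k * c 2)
      + 2 * (a 0 * b 0 * c 0 + a 1 * b 1 * c 1 + a 2 * b 2 * c 2) := by
  have ha' : a 2 = -a 0 - a 1 := by rw [← sub_eq_zero, ← ha]; abel
  have hb' : b 2 = -b 0 - b 1 := by rw [← sub_eq_zero, ← hb]; abel
  have hc' : c 2 = -c 0 - c 1 := by rw [← sub_eq_zero, ← hc]; abel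
  fin_cases k <;> simp only [Fin.zero_eta, Fin.mk_one, Fin.reduceFinMk, ha', hb', hc'] <;>
    noncomm_ring

/-- The identity `cubic_ring` multiplied by `u k` and summed over `k`, with the factors regrouped
into power sums when the entries of `b` and `c` anticommute. -/
lemma cubic_powerSum_ring {R : Type*} [Ring R] (a b c u : Fin 3 → R)
    (ha : a 0 + a 1 + a 2 = 0) (hb : b 0 + b 1 + b 2 = 0) (hc : c 0 + c 1 + c 2 = 0)
    (hu : ∀ i j, b j * c j * u i = u i * (b j * c j)) (hbc : ∀ i j, b i * c j = -(c j * b i)) :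
    6 * ∑ i, a i * b i * c i * u i = (∑ i, a i * b i) * (∑ i, c i * u i)
      + (∑ i, a i * u i) * (∑ i, b i * c i)
      - (∑ i, a i * c i) * (∑ i, b i * u i)
      + 2 * ((∑ i, a i * b i * c i) * ∑ i, u i) := by
  have h2 : ∀ k, a k * (b 0 * c 0 + b 1 * c 1 + b 2 * c 2) * u k
      = a k * u k * (b 0 * c 0 + b 1 * c 1 + b 2 * c 2) := by
    intro k
    simp only [mul_assoc, add_mul, mul_add] at hu ⊢
    simp only [hu]
  have h3 : ∀ k, (a 0 * b k * c 0 + a 1 * b k * c 1 + a 2 * b k * c 2) * u k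
      = -((a 0 * c 0 + a 1 * c 1 + a 2 * c 2) * (b k * u k)) := by
    intro k
    simp only [mul_assoc (a _) (b _) (c _), hbc]
    noncomm_ring
  have h : ∀ k, 6 * (a k * b k * c k * u k)
      = (a 0 * b 0 + a 1 * b 1 + a 2 * b 2) * (c k * u k)
      + a k * u k * (b 0 * c 0 + b 1 * c 1 + b 2 * c 2)
      - (a 0 * c 0 + a 1 * c 1 + a 2 * c 2) * (b k * u k)
      + 2 * ((a 0 * b 0 * c 0 + a 1 * b 1 * c 1 + a 2 * b 2 * c 2) * u k) := by
    intro k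
    rw [← mul_assoc, cubic_ring a b c ha hb hc k, add_mul, add_mul, add_mul, h2, h3]
    noncomm_ring
  simp only [Fin.sum_univ_three, mul_add (6 : R), h]
  noncomm_ring

/-- Inclusion–exclusion: the sum of `f i * g j * h k` over distinct `i, j, k` in terms of power
sums. -/
lemma symmetrize_eq {R : Type*} [Ring R] (f g h : Fin 3 → R) :
    f 0 * g 1 * h 2 + f 1 * g 0 * h 2 + f 2 * g 1 * h 0 + f 0 * g 2 * h 1
      + f 1 * g 2 * h 0 + f 2 * g 0 * h 1
    = (∑ i, f i) * (∑ i, g i) * (∑ i, h i) - (∑ i, f i * g i) * (∑ i, h i)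
      - (∑ i, f i) * (∑ i, g i * h i) - (∑ i, ∑ j, f i * g j * h i)
      + 2 * ∑ i, f i * g i * h i := by
  simp only [Fin.sum_univ_three]
  noncomm_ring

/-! ### Monomials and power sums -/

section Abstract

variable {m : ℕ} {K : Type*} [Ring K]

/-- The product `α_{j₁} ⋯ α_{j_k}` (resp. `β`, `γ` for `i = 1, 2`) over a list of indices. -/
def word (e : Fin m → Fin 3 → K) (i : Fin 3) (l : List (Fin m)) : K := (l.map fun j => e j i).prod

variable {e : Fin m → Fin 3 → K}

@[simp] lemma word_nil (i : Fin 3) : word e i [] = 1 := rfl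

lemma word_cons (i : Fin 3) (j : Fin m) (l : List (Fin m)) :
    word e i (j :: l) = e j i * word e i l := by simp [word]

lemma word_append (i : Fin 3) (l l' : List (Fin m)) :
    word e i (l ++ l') = word e i l * word e i l' := by simp [word]

variable [Algebra ℚ K]

/-- The even generators `x 0, x 1, x 2` (playing the roles of `x, y, w`) and the odd generators
`e j 0, e j 1, e j 2` (playing the roles of `α_j, β_j, γ_j`) of a ℚ-algebra `K`, with the relations
among them that hold in `K(m)`. Those which are not needed below, such as the vanishing of the
sixth power sum of `x`, are left out, so that `K` need not be isomorphic to `K(m)`. -/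
structure TripleGens (x : Fin 3 → K) (e : Fin m → Fin 3 → K) : Prop where
  x_comm : ∀ i z, x i * z = z * x i
  x_sum : x 0 + x 1 + x 2 = 0
  x_sq_sum : x 0 ^ 2 + x 1 ^ 2 + x 2 ^ 2 = 0
  e_sum : ∀ j, e j 0 + e j 1 + e j 2 = 0
  e_swap : ∀ j i j' i', e j i * e j' i' = -(e j' i' * e j i)
  e_sq : ∀ j i, e j i * e j i = 0
  adjoin_eq_top : Algebra.adjoin ℚ (Set.range x ∪ Set.range fun q : Fin m × Fin 3 => e q.1 q.2) = ⊤

/-- The monomial `x^d α_{j₁} ⋯ α_{j_k}` (resp. with `y, β` and `w, γ`). -/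
def mono (x : Fin 3 → K) (e : Fin m → Fin 3 → K) (i : Fin 3) (d : ℕ) (l : List (Fin m)) : K :=
  x i ^ d * word e i l

/-- The power sum `x^d α_l + y^d β_l + w^d γ_l` indexed by a list `l`, possibly unsorted or with
repetitions. -/
def powerSum (x : Fin 3 → K) (e : Fin m → Fin 3 → K) (d : ℕ) (l : List (Fin m)) : K :=
  ∑ i, mono x e i d l

/-- The subalgebra generated by the `z(i, I)` with `1 ≤ i ≤ 6` and `|I| ≤ 3`. -/
def zAlg (x : Fin 3 → K) (e : Fin m → Fin 3 → K) : Subalgebra ℚ K :=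
  Algebra.adjoin ℚ {z : K | ∃ (i : ℕ) (I : Finset (Fin m)),
        1 ≤ i ∧ i ≤ 6 ∧ I.card ≤ 3 ∧ z = powerSum x e (i - 1) (I.sort (· ≤ ·))}

variable {x : Fin 3 → K}

namespace TripleGens

lemma x_pow_comm (h : TripleGens x e) (i : Fin 3) (d : ℕ) (z : K) :
    z * x i ^ d = x i ^ d * z :=
  (Commute.pow_left (h.x_comm i z : Commute (x i) z) d).symm

lemma mono_mul (h : TripleGens x e) (i : Fin 3) (d d' : ℕ) (l l' : List (Fin m)) :
    mono x e i d l * mono x e i d' l' = mono x e i (d + d') (l ++ l') := by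
  rw [mono, mono, mono, word_append, pow_add, mul_assoc, ← mul_assoc (word e i l),
    h.x_pow_comm i d', mul_assoc, mul_assoc]

lemma e_mul_word (h : TripleGens x e) (j : Fin m) (i i' : Fin 3) (l : List (Fin m)) :
    e j i * word e i' l = (-1 : ℚ) ^ l.length • (word e i' l * e j i) := by
  induction l with
  | nil => simp
  | cons a l ih =>
    rw [word_cons, ← mul_assoc, h.e_swap, neg_mul, mul_assoc, ih, List.length_cons, pow_succ,
      mul_smul_comm, mul_assoc]
    simp

lemma word_mul_word (h : TripleGens x e) (i i' : Fin 3) (l l' : List (Fin m)) :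
    word e i l * word e i' l' =
      (-1 : ℚ) ^ (l.length * l'.length) • (word e i' l' * word e i l) := by
  induction l with
  | nil => simp
  | cons a l ih =>
    rw [word_cons, mul_assoc, ih, mul_smul_comm, ← mul_assoc, h.e_mul_word, smul_mul_assoc,
      smul_smul, mul_assoc, ← pow_add, List.length_cons, Nat.succ_mul]

lemma mono_comm (h : TripleGens x e) (i i' : Fin 3) (d d' : ℕ) (l l' : List (Fin m)) :
    mono x e i d l * mono x e i' d' l' =
      (-1 : ℚ) ^ (l.length * l'.length) • (mono x e i' d' l' * mono x e i d l) := by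
  have hr : ∀ i i' d d' l l', mono x e i d l * mono x e i' d' l'
      = x i ^ d * x i' ^ d' * (word e i l * word e i' l') := by
    intro i i' d d' l l'
    rw [mono, mono, mul_assoc, ← mul_assoc (word e i l), h.x_pow_comm i' d']
    simp only [mul_assoc]
  rw [hr, hr, h.word_mul_word, mul_smul_comm, h.x_pow_comm i' d']

lemma mono_sum (h : TripleGens x e) (j : Fin m) :
    mono x e 0 0 [j] + mono x e 1 0 [j] + mono x e 2 0 [j] = 0 := by
  simpa [mono, word_cons] using h.e_sum j

/-! ### Reduction of power sums -/

/-- Shortening of power sums over lists with at least three entries. -/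
lemma cubic_powerSum (h : TripleGens x e) (d : ℕ) (a b c : Fin m) (t : List (Fin m)) :
    6 * powerSum x e d (a :: b :: c :: t) = powerSum x e 0 [a, b] * powerSum x e d (c :: t)
      + powerSum x e d (a :: t) * powerSum x e 0 [b, c]
      - powerSum x e 0 [a, c] * powerSum x e d (b :: t)
      + 2 * (powerSum x e 0 [a, b, c] * powerSum x e d t) := by
  have hc := cubic_powerSum_ring (fun i => mono x e i 0 [a]) (fun i => mono x e i 0 [b])
    (fun i => mono x e i 0 [c]) (fun i => mono x e i d t) (h.mono_sum a) (h.mono_sum b)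
    (h.mono_sum c)
    (fun i j => by
      rw [h.mono_mul, h.mono_comm]
      simp [pow_mul])
    (fun i j => by rw [h.mono_comm]; simp)
  simpa only [h.mono_mul, zero_add, List.cons_append, List.nil_append,
    powerSum] using hc

/-- The three cubes `x³, y³, w³` coincide. -/
lemma x_cube (h : TripleGens x e) (i : Fin 3) : 3 * x i ^ 3 = ∑ k, x k ^ 3 := by
  have hc := cubic_ring x x x h.x_sum h.x_sum h.x_sum i
  have hsq : x 0 * x 0 + x 1 * x 1 + x 2 * x 2 = 0 := by
    simpa only [pow_two] using h.x_sq_sum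
  have hmix : ∀ k, x k * x i * x k = x k * x k * x i := fun k => by
    rw [mul_assoc, h.x_comm i, mul_assoc, ← mul_assoc]
  rw [hmix 0, hmix 1, hmix 2, ← add_mul, ← add_mul, hsq, zero_mul, mul_zero, zero_add, zero_add,
    zero_add] at hc
  have h2 : (2 : ℚ) • (3 * x i ^ 3) = (2 : ℚ) • ∑ k, x k ^ 3 := by
    rw [Algebra.smul_def, Algebra.smul_def, map_ofNat, Fin.sum_univ_three, ← mul_assoc]
    norm_num
    simpa only [pow_succ, pow_zero, one_mul] using hc
  exact smul_right_injective K (two_ne_zero' ℚ) h2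

lemma powerSum_add_three (h : TripleGens x e) (d : ℕ) (l : List (Fin m)) :
    3 * powerSum x e (d + 3) l = powerSum x e 3 [] * powerSum x e d l := by
  have h3 : powerSum x e 3 [] = ∑ k, x k ^ 3 := by simp [powerSum, mono]
  rw [h3, powerSum, powerSum, Finset.mul_sum, Finset.mul_sum]
  refine Finset.sum_congr rfl fun i _ => ?_
  rw [mono, mono, ← h.x_cube i, add_comm, pow_add]
  simp only [mul_assoc]

lemma mem_of_natCast_mul_mem (S : Subalgebra ℚ K) (n : ℕ) (hn : n ≠ 0) {z : K}
    (h : (n : K) * z ∈ S) : z ∈ S := by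
  have h1 : z = ((n : ℚ)⁻¹) • ((n : K) * z) := by
    rw [← nsmul_eq_mul, ← Nat.cast_smul_eq_nsmul ℚ, smul_smul,
      inv_mul_cancel₀ (by exact_mod_cast hn), one_smul]
  rw [h1]
  exact S.smul_mem h _

/-- Reordering a list changes all three words by one common sign. -/
lemma word_perm (h : TripleGens x e) {l l' : List (Fin m)} (hl : l.Perm l') :
    ∃ ε : ℚ, ∀ i, word e i l = ε • word e i l' := by
  induction hl with
  | nil => exact ⟨1, by simp⟩
  | cons a _ ih =>
    obtain ⟨ε, hε⟩ := ih
    exact ⟨ε, fun i => by rw [word_cons, word_cons, hε, mul_smul_comm]⟩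
  | swap a b l =>
    refine ⟨-1, fun i => ?_⟩
    simp only [word_cons, ← mul_assoc]
    rw [h.e_swap]
    simp
  | trans _ _ ih1 ih2 =>
    obtain ⟨ε, hε⟩ := ih1
    obtain ⟨δ, hδ⟩ := ih2
    exact ⟨ε * δ, fun i => by rw [hε, hδ, smul_smul]⟩

lemma word_eq_zero (h : TripleGens x e) {l : List (Fin m)} (hl : ¬ l.Nodup) (i : Fin 3) :
    word e i l = 0 := by
  induction l with
  | nil => simp at hl
  | cons a l ih =>
    rw [word_cons]
    by_cases hn : l.Nodup
    · have ha : a ∈ l := by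
        by_contra ha
        exact hl (List.nodup_cons.mpr ⟨ha, hn⟩)
      obtain ⟨ε, hε⟩ := h.word_perm (List.perm_cons_erase ha)
      rw [hε, word_cons, mul_smul_comm, ← mul_assoc, h.e_sq]
      simp
    · rw [ih hn, mul_zero]

lemma powerSum_mem_of_short (h : TripleGens x e) (l : List (Fin m)) (hl : l.length ≤ 3)
    (d : ℕ) (hd : d ≤ 5) : powerSum x e d l ∈ zAlg x e := by
  by_cases hn : l.Nodup
  · have hp : l.Perm (l.toFinset.sort (· ≤ ·)) := by
      refine (List.perm_ext_iff_of_nodup hn (Finset.sort_nodup _ _)).mpr fun a => ?_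
      simp
    obtain ⟨ε, hε⟩ := h.word_perm hp
    have h : powerSum x e d l = ε • powerSum x e (d + 1 - 1) (l.toFinset.sort (· ≤ ·)) := by
      simp only [powerSum, mono, hε, mul_smul_comm, ← Finset.smul_sum, Nat.add_sub_cancel]
    rw [h]
    refine Subalgebra.smul_mem _ (Algebra.subset_adjoin ?_) _
    exact ⟨d + 1, l.toFinset, by omega, by omega, (List.toFinset_card_le l).trans hl, rfl⟩
  · simp [powerSum, mono, h.word_eq_zero hn]

lemma powerSum_mem (h : TripleGens x e) (d : ℕ) (l : List (Fin m)) :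
    powerSum x e d l ∈ zAlg x e := by
  induction hn : l.length using Nat.strong_induction_on generalizing d l with
  | _ n ih =>
  by_cases h3 : l.length ≤ 3
  · clear ih
    induction d using Nat.strong_induction_on with
    | _ d ihd =>
    by_cases hd : d ≤ 5
    · exact h.powerSum_mem_of_short l h3 d hd
    · obtain ⟨k, rfl⟩ : ∃ k, d = k + 3 := ⟨d - 3, by omega⟩
      refine mem_of_natCast_mul_mem _ 3 (by norm_num) ?_
      rw [Nat.cast_ofNat, h.powerSum_add_three]
      exact mul_mem (h.powerSum_mem_of_short [] (by simp) 3 (by norm_num)) (ihd k (by omega))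
  · obtain ⟨a, b, c, t, rfl⟩ : ∃ a b c t, l = a :: b :: c :: t := by
      match l, h3 with
      | a :: b :: c :: t, _ => exact ⟨a, b, c, t, rfl⟩
      | [], h3 | [_], h3 | [_, _], h3 => simp only [List.length_cons, List.length_nil] at h3; omega
    simp only [List.length_cons] at hn h3
    have key : ∀ d l', l'.length < n → powerSum x e d l' ∈ zAlg x e :=
      fun d l' h => ih _ h d l' rfl
    refine mem_of_natCast_mul_mem _ 6 (by norm_num) ?_
    rw [Nat.cast_ofNat, h.cubic_powerSum]
    refine add_mem (sub_mem (add_mem ?_ ?_) ?_) (mul_mem (ofNat_mem _ 2) ?_) <;>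
      refine mul_mem (key _ _ ?_) (key _ _ ?_) <;>
      first | omega | (simp only [List.length_cons, List.length_nil]; omega)

/-! ### A spanning set -/

/-- The product of three monomials, one in each of the variable sets `(x, α)`, `(y, β)`,
`(w, γ)`. -/
def triple (x : Fin 3 → K) (e : Fin m → Fin 3 → K) (a b c : ℕ) (l₀ l₁ l₂ : List (Fin m)) : K :=
  mono x e 0 a l₀ * mono x e 1 b l₁ * mono x e 2 c l₂

/-- The span of all products of three monomials. -/
def tripleSpan (x : Fin 3 → K) (e : Fin m → Fin 3 → K) : Submodule ℚ K :=
  Submodule.span ℚ {z | ∃ a b c l₀ l₁ l₂, z = triple x e a b c l₀ l₁ l₂}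

lemma triple_mem (a b c : ℕ) (l₀ l₁ l₂ : List (Fin m)) :
    mono x e 0 a l₀ * mono x e 1 b l₁ * mono x e 2 c l₂ ∈ tripleSpan x e :=
  Submodule.subset_span ⟨a, b, c, l₀, l₁, l₂, rfl⟩

/-- The two kinds of generators, `mono x e i 1 [] = x i` and `mono x e i 0 [j] = e j i`, are covered
simultaneously. -/
lemma mono_mul_mem (h : TripleGens x e) (i : Fin 3) (d : ℕ) (l : List (Fin m)) {z : K}
    (hz : z ∈ tripleSpan x e) : mono x e i d l * z ∈ tripleSpan x e := by
  induction hz using Submodule.span_induction with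
  | zero => rw [mul_zero]; exact zero_mem _
  | add u v _ _ hu hv => rw [mul_add]; exact add_mem hu hv
  | smul r u _ hu => rw [mul_smul_comm]; exact Submodule.smul_mem _ _ hu
  | mem z hz =>
    obtain ⟨a, b, c, l₀, l₁, l₂, rfl⟩ := hz
    simp only [triple]
    fin_cases i <;> simp only [Fin.zero_eta, Fin.mk_one, Fin.reduceFinMk]
    · rw [← mul_assoc, ← mul_assoc, h.mono_mul]
      exact triple_mem _ _ _ _ _ _
    · rw [← mul_assoc, ← mul_assoc, h.mono_comm, smul_mul_assoc, smul_mul_assoc,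
        mul_assoc (mono x e 0 a l₀), h.mono_mul]
      exact Submodule.smul_mem _ _ (triple_mem _ _ _ _ _ _)
    · rw [mul_assoc (mono x e 0 a l₀), ← mul_assoc, h.mono_comm, smul_mul_assoc,
        mul_assoc (mono x e 0 a l₀), ← mul_assoc (mono x e 2 d l), h.mono_comm, smul_mul_assoc,
        mul_assoc (mono x e 1 b l₁), h.mono_mul, mul_smul_comm, ← mul_assoc]
      exact Submodule.smul_mem _ _ (Submodule.smul_mem _ _ (triple_mem _ _ _ _ _ _))

lemma span_triples (h : TripleGens x e) (z : K) : z ∈ tripleSpan x e := by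
  have key : ∀ t ∈ tripleSpan x e, z * t ∈ tripleSpan x e := by
    have hz : z ∈ Algebra.adjoin ℚ
        (Set.range x ∪ Set.range fun q : Fin m × Fin 3 => e q.1 q.2) := by
      rw [h.adjoin_eq_top]
      trivial
    induction hz using Algebra.adjoin_induction with
    | mem z hz =>
      intro t ht
      rcases hz with ⟨i, rfl⟩ | ⟨⟨j, i⟩, rfl⟩
      · simpa [mono] using h.mono_mul_mem i 1 [] ht
      · simpa [mono, word_cons] using h.mono_mul_mem i 0 [j] ht
    | algebraMap r =>
      intro t ht
      rw [← Algebra.smul_def]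
      exact Submodule.smul_mem _ _ ht
    | add u v _ _ hu hv =>
      intro t ht
      rw [add_mul]
      exact add_mem (hu t ht) (hv t ht)
    | mul u v _ _ hu hv =>
      intro t ht
      rw [mul_assoc]
      exact hu _ (hv t ht)
  have h1 : (1 : K) ∈ tripleSpan x e := by
    simpa [mono] using triple_mem (x := x) (e := e) 0 0 0 [] [] []
  simpa using key 1 h1

/-! ### Symmetrization -/

variable {act : Equiv.Perm (Fin 3) → K →ₐ[ℚ] K}

lemma act_mono (hx : ∀ σ i, act σ (x i) = x (σ i)) (he : ∀ σ j i, act σ (e j i) = e j (σ i))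
    (σ : Equiv.Perm (Fin 3)) (i : Fin 3) (d : ℕ) (l : List (Fin m)) :
    act σ (mono x e i d l) = mono x e (σ i) d l := by
  rw [mono, map_mul, map_pow, hx, mono]
  congr 1
  induction l with
  | nil => simp
  | cons a l ih => rw [word_cons, map_mul, ih, he, word_cons]

lemma act_powerSum (hx : ∀ σ i, act σ (x i) = x (σ i)) (he : ∀ σ j i, act σ (e j i) = e j (σ i))
    (σ : Equiv.Perm (Fin 3)) (d : ℕ) (l : List (Fin m)) :
    act σ (powerSum x e d l) = powerSum x e d l := by
  rw [powerSum, map_sum]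
  simp only [act_mono hx he]
  exact Equiv.sum_comp σ fun i => mono x e i d l

/-- The sum of the six translates of an element under `S₃`. -/
def symmetrizer (act : Equiv.Perm (Fin 3) → K →ₐ[ℚ] K) : K →ₗ[ℚ] K :=
  (act 1).toLinearMap + (act (Equiv.swap 0 1)).toLinearMap
    + (act (Equiv.swap 0 2)).toLinearMap + (act (Equiv.swap 1 2)).toLinearMap
    + (act (finRotate 3)).toLinearMap + (act (finRotate 3)⁻¹).toLinearMap

lemma symmetrizer_triple_mem (h : TripleGens x e) (hx : ∀ σ i, act σ (x i) = x (σ i))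
    (he : ∀ σ j i, act σ (e j i) = e j (σ i)) (a b c : ℕ) (l₀ l₁ l₂ : List (Fin m)) :
    symmetrizer act (triple x e a b c l₀ l₁ l₂) ∈ zAlg x e := by
  have hs : symmetrizer act (triple x e a b c l₀ l₁ l₂) =
      mono x e 0 a l₀ * mono x e 1 b l₁ * mono x e 2 c l₂
      + mono x e 1 a l₀ * mono x e 0 b l₁ * mono x e 2 c l₂
      + mono x e 2 a l₀ * mono x e 1 b l₁ * mono x e 0 c l₂
      + mono x e 0 a l₀ * mono x e 2 b l₁ * mono x e 1 c l₂
      + mono x e 1 a l₀ * mono x e 2 b l₁ * mono x e 0 c l₂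
      + mono x e 2 a l₀ * mono x e 0 b l₁ * mono x e 1 c l₂ := by
    simp only [symmetrizer, triple, LinearMap.add_apply, AlgHom.toLinearMap_apply, map_mul,
      act_mono hx he]
    rfl
  rw [hs, symmetrize_eq (fun i => mono x e i a l₀) (fun i => mono x e i b l₁)
    (fun i => mono x e i c l₂)]
  -- The middle factor of the mixed term is moved to the right, at the cost of a sign.
  have hmix : ∑ i, ∑ j, mono x e i a l₀ * mono x e j b l₁ * mono x e i c l₂
      = (-1 : ℚ) ^ (l₁.length * l₂.length) •
        (powerSum x e (a + c) (l₀ ++ l₂) * powerSum x e b l₁) := by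
    rw [powerSum, powerSum, Finset.sum_mul_sum, Finset.smul_sum]
    refine Finset.sum_congr rfl fun i _ => ?_
    rw [Finset.smul_sum]
    refine Finset.sum_congr rfl fun j _ => ?_
    rw [mul_assoc, h.mono_comm j i, mul_smul_comm, ← mul_assoc, h.mono_mul]
  rw [hmix]
  have hfold : ∀ d l, ∑ i, mono x e i d l = powerSum x e d l := fun _ _ => rfl
  simp only [h.mono_mul, hfold]
  have hp := h.powerSum_mem
  refine add_mem (sub_mem (sub_mem (sub_mem ?_ ?_) ?_) ?_) ?_
  · exact mul_mem (mul_mem (hp _ _) (hp _ _)) (hp _ _)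
  · exact mul_mem (hp _ _) (hp _ _)
  · exact mul_mem (hp _ _) (hp _ _)
  · exact Subalgebra.smul_mem _ (mul_mem (hp _ _) (hp _ _)) _
  · exact mul_mem (ofNat_mem _ 2) (hp _ _)

lemma symmetrizer_mem (h : TripleGens x e) (hx : ∀ σ i, act σ (x i) = x (σ i))
    (he : ∀ σ j i, act σ (e j i) = e j (σ i)) (z : K) : symmetrizer act z ∈ zAlg x e := by
  have hz := h.span_triples z
  induction hz using Submodule.span_induction with
  | zero => rw [map_zero]; exact zero_mem _
  | add u v _ _ hu hv => rw [map_add]; exact add_mem hu hv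
  | smul r u _ hu => rw [map_smul]; exact Subalgebra.smul_mem _ hu _
  | mem z hz =>
    obtain ⟨a, b, c, l₀, l₁, l₂, rfl⟩ := hz
    exact h.symmetrizer_triple_mem hx he a b c l₀ l₁ l₂

/-- The elements invariant under permuting the triples of generators form the subalgebra generated
by the `z(i, I)`. -/
theorem invariants_eq (h : TripleGens x e) (hx : ∀ σ i, act σ (x i) = x (σ i))
    (he : ∀ σ j i, act σ (e j i) = e j (σ i)) : {z : K | ∀ σ, act σ z = z} = zAlg x e := by
  refine Set.Subset.antisymm (fun z hz => ?_) (fun z hz σ => ?_)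
  · refine mem_of_natCast_mul_mem _ 6 (by norm_num) ?_
    have h6 : ((6 : ℕ) : K) * z = symmetrizer act z := by
      simp only [symmetrizer, LinearMap.add_apply, AlgHom.toLinearMap_apply]
      rw [hz, hz, hz, hz, hz, hz, ← nsmul_eq_mul]
      abel
    rw [h6]
    exact h.symmetrizer_mem hx he z
  · have hle : zAlg x e ≤ AlgHom.equalizer (act σ) (AlgHom.id ℚ K) := by
      refine Algebra.adjoin_le ?_
      rintro _ ⟨i, I, -, -, -, rfl⟩
      exact act_powerSum hx he σ _ _
    exact hle hz

end TripleGens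

end Abstract

/-! ### Specialization to a tensor product -/

section Tensor

variable {m : ℕ} {A E : Type*} [CommRing A] [Algebra ℚ A] [Ring E] [Algebra ℚ E]
  {a : Fin 3 → A} {f : Fin m → Fin 3 → E}

lemma tripleGens_tensor (ha : a 0 + a 1 + a 2 = 0) (ha2 : a 0 ^ 2 + a 1 ^ 2 + a 2 ^ 2 = 0)
    (hA : Algebra.adjoin ℚ (Set.range a) = ⊤) (hf : ∀ j, f j 0 + f j 1 + f j 2 = 0)
    (hswap : ∀ j i j' i', f j i * f j' i' = -(f j' i' * f j i)) (hsq : ∀ j i, f j i * f j i = 0)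
    (hE : Algebra.adjoin ℚ (Set.range fun q : Fin m × Fin 3 => f q.1 q.2) = ⊤) :
    TripleGens (K := A ⊗[ℚ] E) (fun i => a i ⊗ₜ 1) (fun j i => 1 ⊗ₜ f j i) where
  x_comm i z := by
    induction z using TensorProduct.induction_on with
    | zero => simp
    | add u v hu hv => rw [mul_add, add_mul, hu, hv]
    | tmul b c => simp [mul_comm]
  x_sum := by simp only [← TensorProduct.add_tmul, ha, TensorProduct.zero_tmul]
  x_sq_sum := by
    simp only [Algebra.TensorProduct.tmul_pow, one_pow, ← TensorProduct.add_tmul, ha2,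
      TensorProduct.zero_tmul]
  e_sum j := by simp only [← TensorProduct.tmul_add, hf, TensorProduct.tmul_zero]
  e_swap j i j' i' := by
    simp only [Algebra.TensorProduct.tmul_mul_tmul, mul_one, ← TensorProduct.tmul_neg]
    rw [hswap]
  e_sq j i := by
    simp only [Algebra.TensorProduct.tmul_mul_tmul, hsq, TensorProduct.tmul_zero]
  adjoin_eq_top := by
    set S := Algebra.adjoin ℚ (Set.range (fun i => a i ⊗ₜ[ℚ] (1 : E)) ∪
      Set.range fun q : Fin m × Fin 3 => (1 : A) ⊗ₜ[ℚ] f q.1 q.2) with hS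
    have h1 : ∀ b : A, b ⊗ₜ[ℚ] (1 : E) ∈ S := by
      intro b
      have hle : Algebra.adjoin ℚ (Set.range a) ≤
          S.comap (Algebra.TensorProduct.includeLeft : A →ₐ[ℚ] A ⊗[ℚ] E) := by
        refine Algebra.adjoin_le ?_
        rintro _ ⟨i, rfl⟩
        exact Algebra.subset_adjoin (Or.inl ⟨i, rfl⟩)
      rw [hA] at hle
      exact hle (Algebra.mem_top : b ∈ ⊤)
    have h2 : ∀ c : E, (1 : A) ⊗ₜ[ℚ] c ∈ S := by
      intro c
      have hle : Algebra.adjoin ℚ (Set.range fun q : Fin m × Fin 3 => f q.1 q.2) ≤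
          S.comap (Algebra.TensorProduct.includeRight : E →ₐ[ℚ] A ⊗[ℚ] E) := by
        refine Algebra.adjoin_le ?_
        rintro _ ⟨q, rfl⟩
        exact Algebra.subset_adjoin (Or.inr ⟨q, rfl⟩)
      rw [hE] at hle
      exact hle (Algebra.mem_top : c ∈ ⊤)
    refine eq_top_iff.mpr fun z _ => ?_
    induction z using TensorProduct.induction_on with
    | zero => exact zero_mem _
    | add u v hu hv => exact add_mem (hu trivial) (hv trivial)
    | tmul b c => simpa using mul_mem (h1 b) (h2 c)

lemma powerSum_tensor (d : ℕ) (l : List (Fin m)) :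
    powerSum (K := A ⊗[ℚ] E) (fun i => a i ⊗ₜ 1) (fun j i => 1 ⊗ₜ f j i) d l
      = ∑ i, (a i ^ d) ⊗ₜ[ℚ] (l.map fun j => f j i).prod := by
  refine Finset.sum_congr rfl fun i _ => ?_
  have h : word (K := A ⊗[ℚ] E) (fun j i => 1 ⊗ₜ f j i) i l
      = 1 ⊗ₜ[ℚ] (l.map fun j => f j i).prod := by
    induction l with
    | nil => rfl
    | cons j l ih => simp [word_cons, ih]
  simp [mono, h]

/-- The description of invariants for a tensor product `A ⊗ E` of algebras with a simultaneous
action on both factors. -/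
theorem invariants_tensor (ha : a 0 + a 1 + a 2 = 0) (ha2 : a 0 ^ 2 + a 1 ^ 2 + a 2 ^ 2 = 0)
    (hA : Algebra.adjoin ℚ (Set.range a) = ⊤) (hf : ∀ j, f j 0 + f j 1 + f j 2 = 0)
    (hswap : ∀ j i j' i', f j i * f j' i' = -(f j' i' * f j i)) (hsq : ∀ j i, f j i * f j i = 0)
    (hE : Algebra.adjoin ℚ (Set.range fun q : Fin m × Fin 3 => f q.1 q.2) = ⊤)
    (actA : Equiv.Perm (Fin 3) → A →ₐ[ℚ] A) (actE : Equiv.Perm (Fin 3) → E →ₐ[ℚ] E)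
    (hactA : ∀ σ i, actA σ (a i) = a (σ i)) (hactE : ∀ σ j i, actE σ (f j i) = f j (σ i)) :
    {z : A ⊗[ℚ] E | ∀ σ, Algebra.TensorProduct.map (actA σ) (actE σ) z = z} =
      ↑(Algebra.adjoin ℚ {z : A ⊗[ℚ] E | ∃ (i : ℕ) (I : Finset (Fin m)),
        1 ≤ i ∧ i ≤ 6 ∧ I.card ≤ 3 ∧
        z = ∑ k, (a k ^ (i - 1)) ⊗ₜ[ℚ] ((I.sort (· ≤ ·)).map fun j => f j k).prod}) := by
  have h := (tripleGens_tensor ha ha2 hA hf hswap hsq hE).invariants_eq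
    (act := fun σ => Algebra.TensorProduct.map (actA σ) (actE σ))
    (fun σ i => by simp [hactA]) (fun σ j i => by simp [hactE])
  simpa only [zAlg, powerSum_tensor] using h

end Tensor

/-! ### The generators of the two factors of `K(m)` -/

section Factors

variable {m : ℕ}

lemma mkA_sum : mkA (X 0) + mkA (X 1) + mkA (X 2) = 0 := by
  simp only [← map_add]
  exact Ideal.Quotient.eq_zero_iff_mem.mpr (Ideal.subset_span (by left; rfl))

lemma mkA_sq_sum : mkA (X 0) ^ 2 + mkA (X 1) ^ 2 + mkA (X 2) ^ 2 = 0 := by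
  simp only [← map_add, ← map_pow]
  exact Ideal.Quotient.eq_zero_iff_mem.mpr (Ideal.subset_span (by right; left; rfl))

lemma adjoin_mkA : Algebra.adjoin ℚ (Set.range fun i => mkA (X i)) = ⊤ := by
  refine eq_top_iff.mpr fun z _ => ?_
  obtain ⟨p, rfl⟩ : ∃ p, mkA p = z := Ideal.Quotient.mk_surjective z
  induction p using MvPolynomial.induction_on with
  | C r => exact Subalgebra.algebraMap_mem _ r
  | add p q hp hq => rw [map_add]; exact add_mem (hp trivial) (hq trivial)
  | mul_X p i hp =>
    rw [map_mul]
    exact mul_mem (hp trivial) (Algebra.subset_adjoin ⟨i, rfl⟩)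

lemma permAq_mkA_X (σ : Equiv.Perm (Fin 3)) (i : Fin 3) :
    permAq σ (mkA (X i)) = mkA (X (σ i)) := by
  change mkA (rename σ (X i)) = _
  rw [rename_X]

lemma vGen_sum : vGen 0 + vGen 1 + vGen 2 = 0 := by
  simp only [vGen, ← Submodule.Quotient.mk_add]
  rw [Submodule.Quotient.mk_eq_zero]
  refine Submodule.subset_span ?_
  rw [Set.mem_singleton_iff]
  funext i
  fin_cases i <;> simp

lemma eGen_sum (j : Fin m) : eGen m j 0 + eGen m j 1 + eGen m j 2 = 0 := by
  simp only [eGen, ← map_add, ← Pi.single_add, vGen_sum]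
  simp

lemma eGen_swap (j : Fin m) (i : Fin 3) (j' : Fin m) (i' : Fin 3) :
    eGen m j i * eGen m j' i' = -(eGen m j' i' * eGen m j i) :=
  eq_neg_of_add_eq_zero_left (ExteriorAlgebra.ι_add_mul_swap _ _)

lemma eGen_sq (j : Fin m) (i : Fin 3) : eGen m j i * eGen m j i = 0 :=
  ExteriorAlgebra.ι_sq_zero _

lemma span_vGen (v : Fin m → Vq) : v ∈ Submodule.span ℚ
    (Set.range fun q : Fin m × Fin 3 => (Pi.single q.1 (vGen q.2) : Fin m → Vq)) := by
  rw [← Finset.univ_sum_single v]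
  refine sum_mem fun j _ => ?_
  obtain ⟨g, hg⟩ := Submodule.Quotient.mk_surjective _ (v j)
  have h : v j = ∑ i, g i • vGen i := by
    have hs : g = ∑ i, g i • Pi.single i (1 : ℚ) := by
      funext k
      simp [Finset.sum_apply, Pi.single_apply]
    rw [← hg]
    conv_lhs => rw [hs]
    simp only [vGen, ← Submodule.mkQ_apply, map_sum, map_smul]
  have h' : (Pi.single j (∑ i, g i • vGen i) : Fin m → Vq)
      = ∑ i, g i • Pi.single j (vGen i) := by
    simp only [← LinearMap.single_apply (R := ℚ) (φ := fun _ : Fin m => Vq), map_sum, map_smul]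
  rw [h, h']
  exact sum_mem fun i _ => Submodule.smul_mem _ _ (Submodule.subset_span ⟨(j, i), rfl⟩)

lemma adjoin_eGen :
    Algebra.adjoin ℚ (Set.range fun q : Fin m × Fin 3 => eGen m q.1 q.2) = ⊤ := by
  refine eq_top_iff.mpr fun z _ => ?_
  induction z using ExteriorAlgebra.induction with
  | algebraMap r => exact Subalgebra.algebraMap_mem _ r
  | add u v hu hv => exact add_mem (hu trivial) (hv trivial)
  | mul u v hu hv => exact mul_mem (hu trivial) (hv trivial)
  | ι v =>
    have hv := span_vGen v
    induction hv using Submodule.span_induction with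
    | zero => rw [map_zero]; exact zero_mem _
    | add u v _ _ hu hv => rw [map_add]; exact add_mem (hu trivial) (hv trivial)
    | smul r u _ hu => rw [map_smul]; exact Subalgebra.smul_mem _ (hu trivial) _
    | mem v hv =>
      obtain ⟨q, rfl⟩ := hv
      exact Algebra.subset_adjoin ⟨q, rfl⟩

lemma permV_vGen (σ : Equiv.Perm (Fin 3)) (i : Fin 3) : permV σ (vGen i) = vGen (σ i) := by
  rw [permV, vGen, Submodule.mapQ_apply, vGen]
  congr 1
  funext k
  simp [LinearMap.funLeft_apply, Pi.single_apply, Equiv.symm_apply_eq]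

lemma extHom_eGen (σ : Equiv.Perm (Fin 3)) (j : Fin m) (i : Fin 3) :
    extHom (LinearMap.compLeft (permV σ) (Fin m)) (eGen m j i) = eGen m j (σ i) := by
  rw [extHom, eGen, ExteriorAlgebra.lift_ι_apply, eGen, LinearMap.comp_apply]
  congr 1
  funext k
  by_cases h : k = j
  · subst h
    simp [permV_vGen]
  · simp [h]

end Factors

/-- For every integer `m ≥ 1`, the invariant subalgebra `K(m)^{S₃}` of
`K(m)` under the subgroup `⟨a²,b⟩ ≅ S₃` of `D₆` equals the ℚ-subalgebra of `K(m)`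
generated by `{z(i, I) : 1 ≤ i ≤ 6, I ⊆ {1,…,m}, |I| ≤ 3}`. -/
theorem invS3_eq_adjoin_zGens (m : ℕ) (hm : 1 ≤ m) :
    invS3 m = ↑(Algebra.adjoin ℚ
      {z : Kk m | ∃ (i : ℕ) (I : Finset (Fin m)),
        1 ≤ i ∧ i ≤ 6 ∧ I.card ≤ 3 ∧ z = zS m i I}) := by
  have h := invariants_tensor (a := fun i => mkA (X i)) (f := eGen m) mkA_sum mkA_sq_sum
    adjoin_mkA eGen_sum eGen_swap eGen_sq adjoin_eGen permAq
    (fun σ => extHom (LinearMap.compLeft (permV σ) (Fin m))) permAq_mkA_X extHom_eGen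
  have hz : ∀ (i : ℕ) (I : Finset (Fin m)), zS m i I = ∑ k, (mkA (X k) ^ (i - 1)) ⊗ₜ[ℚ]
      ((I.sort (· ≤ ·)).map fun j => eGen m j k).prod := fun i I => by
    rw [Fin.sum_univ_three, zS, zz, map_pow, map_pow, map_pow]
    rfl
  simp only [hz]
  exact h

end
end
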